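/- arXiv:2511.20451 — 2 statements merged into one kernel-verified Lean document; each statement's English description precedes it below -/
import Mathlib

section
/- Let ν₂ ∈ (0,1/2) and β ∈ (0,1/2). There exist constants C > 0 and T₀ ∈ (0,1/2), depending only on ν₂, β, such that for every T ∈ (0, T₀), every continuous ξ : [0, T] → ℝ³ × [0, ∞), every M > 0, and every measurable g₁ on ℝ⁴₊ × (0, T) with |g₁(x, t)| ≤ M·μ₀(t)^{ν₂}/|x − ξ(t)|² when |x − ξ(t)| ≥ μ₀(t)R(t) and g₁(x, t) = 0 when |x − ξ(t)| < μ₀(t)R(t), the Duhamel representation ψ of g₁ satisfies for all x ∈ ℝ³ × [0, ∞) and t ∈ (0, T): (i) |ψ(x, t)| ≤ C M T^{ν₂}|log T|^{1−ν₂}; (ii) |ψ(x, t) − ψ(x, T)| ≤ C M (T − t)^{ν₂}|log T|^{ν₂}|log(T − t)|^{1−2ν₂}; (iii) |∇_x ψ(x, t)| ≤ C M μ₀(t)^{ν₂−1}/R(t). -/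
noncomputable section
open Real Set MeasureTheory

/-- `ℝ⁴`, points written `x = (x̃, x₄)` with `x̃ = (x 0, x 1, x 2)` and `x₄ = x 3`. -/
abbrev E4 : Type := EuclideanSpace ℝ (Fin 4)

/-- The open upper half-space `ℝ⁴₊ = {x : x₄ > 0}`. -/
def halfSpace : Set E4 := {x | 0 < x 3}

/-- `μ₀(t) = |log(2T)|·(T - t)/(log(T - t))²`. -/
def μ₀ (T t : ℝ) : ℝ := |Real.log (2 * T)| * (T - t) / (Real.log (T - t)) ^ 2

/-- `R(t) = μ₀(t)^{-β}`. -/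
def Rfn (β T t : ℝ) : ℝ := μ₀ T t ^ (-β)

/-- The Neumann heat kernel of `ℝ⁴₊`:
`K_t(x, z) = (4πt)⁻²(exp(-|x - z|²/(4t)) + exp(-|x - z̄|²/(4t)))` with `z̄ = (z̃, -z₄)`. -/
def heatK (t : ℝ) (x z : E4) : ℝ :=
  (1 / (4 * π * t) ^ 2) *
    (Real.exp (-‖x - z‖ ^ 2 / (4 * t)) +
      Real.exp (-((x 0 - z 0) ^ 2 + (x 1 - z 1) ^ 2 + (x 2 - z 2) ^ 2 + (x 3 + z 3) ^ 2)
        / (4 * t)))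

/-- The Duhamel representation `ψ(x, t) = ∫₀ᵗ ∫_{ℝ⁴₊} K_{t-s}(x, z) g(z, s) dz ds`. -/
def duhamel (g : E4 → ℝ → ℝ) (x : E4) (t : ℝ) : ℝ :=
  ∫ s in (0 : ℝ)..t, ∫ z in halfSpace, heatK (t - s) x z * g z s

lemma gauss_int (c : ℝ) (hc : 0 < c) (y : E4) :
    Integrable (fun z : E4 => Real.exp (-‖y - z‖ ^ 2 / c)) ∧
      ∫ z : E4, Real.exp (-‖y - z‖ ^ 2 / c) = π ^ 2 * c ^ 2 := by
  have h1 : ∫ z : E4, Real.exp (-‖y - z‖ ^ 2 / c) = π ^ 2 * c ^ 2 := by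
    rw [integral_sub_left_eq_self (fun z : E4 => Real.exp (-‖z‖ ^ 2 / c)) volume y]
    have := GaussianFourier.integral_rexp_neg_mul_sq_norm (V := E4) (b := 1 / c) (by positivity)
    have e : ∀ z : E4, -‖z‖ ^ 2 / c = -(1 / c) * ‖z‖ ^ 2 := fun z => by ring
    simp only [e]
    rw [this]
    have : ((Module.finrank ℝ E4 : ℝ) / 2) = (2 : ℕ) := by
      simp; norm_num
    rw [this, Real.rpow_natCast]
    field_simp
  refine ⟨Integrable.of_integral_ne_zero ?_, h1⟩
  rw [h1]; positivity

lemma sing_int (ρ : ℝ) (hρ : 0 < ρ) (ξ : E4) :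
    Integrable (fun z : E4 => (Iio ρ).indicator (fun y : ℝ => (y ^ 2)⁻¹) ‖z - ξ‖) ∧
      ∫ z : E4, (Iio ρ).indicator (fun y : ℝ => (y ^ 2)⁻¹) ‖z - ξ‖ =
        2 * (volume : Measure E4).real (Metric.ball 0 1) * ρ ^ 2 := by
  have hd : Module.finrank ℝ E4 = 4 := by simp
  have hcongr : ∀ y ∈ Ioi (0 : ℝ), y ^ (Module.finrank ℝ E4 - 1) •
      (Iio ρ).indicator (fun y : ℝ => (y ^ 2)⁻¹) y = (Ioo 0 ρ).indicator (fun y => y) y := by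
    intro y hy
    have hy : 0 < y := hy
    rw [hd]
    by_cases h : y < ρ
    · simp [indicator, h, hy]; field_simp
    · simp [indicator, h]
  constructor
  · have h2 : Integrable (fun z : E4 => (Iio ρ).indicator (fun y : ℝ => (y ^ 2)⁻¹) ‖z‖) := by
      rw [integrable_fun_norm_addHaar, integrableOn_congr_fun hcongr measurableSet_Ioi]
      refine Integrable.integrableOn ?_
      rw [integrable_indicator_iff measurableSet_Ioo]
      exact (continuous_id.integrableOn_Icc).mono_set Ioo_subset_Icc_self
    exact h2.comp_sub_right ξ
  · rw [integral_sub_right_eq_self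
      (fun z : E4 => (Iio ρ).indicator (fun y : ℝ => (y ^ 2)⁻¹) ‖z‖) ξ,
      integral_fun_norm_addHaar, setIntegral_congr_fun measurableSet_Ioi hcongr,
      setIntegral_indicator measurableSet_Ioo]
    have : Ioi (0:ℝ) ∩ Ioo 0 ρ = Ioo 0 ρ := by
      ext y; simp
    rw [this, ← integral_Ioc_eq_integral_Ioo, ← intervalIntegral.integral_of_le hρ.le, integral_id,
      hd]
    simp; ring

/-- Pointwise weight bound for the source at a fixed time. -/
def Adm (g : E4 → ℝ) (N r : ℝ) (ξ : E4) : Prop :=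
  ∀ z ∈ halfSpace, |g z| ≤ N / ‖z - ξ‖ ^ 2 ∧ |g z| ≤ N / r ^ 2

lemma measurableSet_halfSpace : MeasurableSet halfSpace := by
  unfold halfSpace
  exact measurableSet_lt measurable_const (by fun_prop)

lemma gauss_weight : ∃ C > (0 : ℝ), ∀ (c r N : ℝ) (ξ y : E4) (g : E4 → ℝ), 0 < c → 0 < r → 0 ≤ N →
    Measurable g → Adm g N r ξ →
    IntegrableOn (fun z => Real.exp (-‖y - z‖ ^ 2 / c) * |g z|) halfSpace ∧
    ∫ z in halfSpace, Real.exp (-‖y - z‖ ^ 2 / c) * |g z| ≤ C * N * (c ^ 2 / (c + r ^ 2)) := by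
  set V := (volume : Measure E4).real (Metric.ball 0 1) with hV
  have hV0 : 0 ≤ V := measureReal_nonneg
  refine ⟨2 * (π ^ 2 + 2 * V), by positivity, ?_⟩
  intro c r N ξ y g hc hr hN hg hA
  obtain ⟨G1, G2⟩ := gauss_int c hc y
  obtain ⟨S1, S2⟩ := sing_int (√c) (Real.sqrt_pos.2 hc) ξ
  rw [Real.sq_sqrt hc.le, ← hV] at S2
  have hInt : IntegrableOn (fun z => Real.exp (-‖y - z‖ ^ 2 / c) * |g z|) halfSpace := by
    refine Integrable.mono' (g := fun z => Real.exp (-‖y - z‖ ^ 2 / c) * (N / r ^ 2))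
      ((G1.mul_const _).integrableOn) (by fun_prop) ?_
    rw [ae_restrict_iff' measurableSet_halfSpace]
    refine Filter.Eventually.of_forall fun z hz => ?_
    rw [Real.norm_of_nonneg (by positivity)]
    gcongr
    exact (hA z hz).2
  refine ⟨hInt, ?_⟩
  have B1 : ∫ z in halfSpace, Real.exp (-‖y - z‖ ^ 2 / c) * |g z|
      ≤ N / r ^ 2 * (π ^ 2 * c ^ 2) := by
    calc _ ≤ ∫ z in halfSpace, Real.exp (-‖y - z‖ ^ 2 / c) * (N / r ^ 2) := by
          refine setIntegral_mono_on hInt ((G1.mul_const _).integrableOn)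
            measurableSet_halfSpace fun z hz => ?_
          gcongr
          exact (hA z hz).2
      _ ≤ ∫ z, Real.exp (-‖y - z‖ ^ 2 / c) * (N / r ^ 2) := by
          refine setIntegral_le_integral (G1.mul_const _) (Filter.Eventually.of_forall fun z => ?_)
          positivity
      _ = _ := by rw [integral_mul_const, G2]; ring
  have B2 : ∫ z in halfSpace, Real.exp (-‖y - z‖ ^ 2 / c) * |g z|
      ≤ N * ((π ^ 2 + 2 * V) * c) := by
    have hI : Integrable (fun z : E4 => N * (Real.exp (-‖y - z‖ ^ 2 / c) / c +
        (Iio √c).indicator (fun y : ℝ => (y ^ 2)⁻¹) ‖z - ξ‖)) :=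
      ((G1.div_const c).add S1).const_mul N
    calc _ ≤ ∫ z in halfSpace, N * (Real.exp (-‖y - z‖ ^ 2 / c) / c +
        (Iio √c).indicator (fun y : ℝ => (y ^ 2)⁻¹) ‖z - ξ‖) := by
          refine setIntegral_mono_on hInt hI.integrableOn measurableSet_halfSpace fun z hz => ?_
          have h1 := (hA z hz).1
          have he : Real.exp (-‖y - z‖ ^ 2 / c) ≤ 1 := by
            rw [Real.exp_le_one_iff, neg_div]
            have : 0 ≤ ‖y - z‖ ^ 2 / c := by positivity
            linarith
          by_cases h : ‖z - ξ‖ < √c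
          · have : (Iio √c).indicator (fun y : ℝ => (y ^ 2)⁻¹) ‖z - ξ‖ = (‖z - ξ‖ ^ 2)⁻¹ := by
              simp [indicator, h]
            rw [this]
            have h3 : 0 ≤ N * (Real.exp (-‖y - z‖ ^ 2 / c) / c) := by positivity
            calc _ ≤ 1 * (N / ‖z - ξ‖ ^ 2) := by gcongr
              _ ≤ _ := by rw [mul_add, one_mul, ← div_eq_mul_inv]; linarith
          · have : (Iio √c).indicator (fun y : ℝ => (y ^ 2)⁻¹) ‖z - ξ‖ = 0 := by
              simp [indicator, h]
            rw [this]
            have h4 : c ≤ ‖z - ξ‖ ^ 2 := by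
              rw [← Real.sqrt_le_left (by positivity)]; exact not_lt.1 h
            calc _ ≤ Real.exp (-‖y - z‖ ^ 2 / c) * (N / c) := by
                  gcongr
                  exact h1.trans (by gcongr)
              _ = _ := by ring
      _ ≤ ∫ z, N * (Real.exp (-‖y - z‖ ^ 2 / c) / c +
        (Iio √c).indicator (fun y : ℝ => (y ^ 2)⁻¹) ‖z - ξ‖) := by
          refine setIntegral_le_integral hI (Filter.Eventually.of_forall fun z => ?_)
          have : 0 ≤ (Iio √c).indicator (fun y : ℝ => (y ^ 2)⁻¹) ‖z - ξ‖ :=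
            indicator_nonneg (fun _ _ => by positivity) _
          positivity
      _ = _ := by
          rw [integral_const_mul, integral_add (G1.div_const c) S1, integral_div, G2, S2]
          field_simp
  rcases le_total (r ^ 2) c with h | h
  · refine B2.trans ?_
    have : c ≤ 2 * (c ^ 2 / (c + r ^ 2)) := by
      rw [← mul_div_assoc, le_div_iff₀ (by positivity)]; nlinarith
    calc _ ≤ N * ((π ^ 2 + 2 * V) * (2 * (c ^ 2 / (c + r ^ 2)))) := by gcongr
      _ = _ := by ring
  · refine B1.trans ?_
    have : c ^ 2 / r ^ 2 ≤ 2 * (c ^ 2 / (c + r ^ 2)) := by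
      rw [← mul_div_assoc, div_le_div_iff₀ (by positivity) (by positivity)]
      have := mul_le_mul_of_nonneg_left h (sq_nonneg c)
      nlinarith
    calc _ = N * (π ^ 2 * (c ^ 2 / r ^ 2)) := by ring
      _ ≤ N * ((π ^ 2 + 2 * V) * (2 * (c ^ 2 / (c + r ^ 2)))) := by gcongr; linarith
      _ = _ := by ring

lemma exp_half_aux (y : ℝ) : y * Real.exp (-y) ≤ 2 * Real.exp (-(y / 2)) := by
  have h := Real.add_one_le_exp (y / 2)
  have e : Real.exp (-(y / 2)) = Real.exp (y / 2) * Real.exp (-y) := by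
    rw [← Real.exp_add]; congr 1; ring
  rw [e]
  have := Real.exp_pos (-y)
  nlinarith

/-- One-sided Lipschitz estimate for a radial Gaussian. -/
lemma gauss_lip_aux (p q : ℝ) (hq : 0 ≤ q) (hpq : q ≤ p) :
    Real.exp (-q ^ 2) - Real.exp (-p ^ 2) ≤ 5 * (p - q) * Real.exp (-q ^ 2 / 2) := by
  have e1 : Real.exp (-q ^ 2) ≤ Real.exp (-q ^ 2 / 2) := by
    apply Real.exp_le_exp.2; nlinarith [sq_nonneg q]
  have hp := Real.exp_pos (-p ^ 2)
  have hh := Real.exp_pos (-q ^ 2 / 2)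
  have hqq := Real.exp_pos (-q ^ 2)
  rcases le_total p (q + 1) with h | h
  · have h1 := Real.add_one_le_exp (-(p ^ 2 - q ^ 2))
    have e2 : Real.exp (-p ^ 2) = Real.exp (-q ^ 2) * Real.exp (-(p ^ 2 - q ^ 2)) := by
      rw [← Real.exp_add]; congr 1; ring
    have h2 : Real.exp (-q ^ 2) - Real.exp (-p ^ 2) ≤ Real.exp (-q ^ 2) * ((p - q) * (p + q)) := by
      rw [e2]; nlinarith
    have h3 := exp_half_aux (q ^ 2)
    have h3' : q ^ 2 * Real.exp (-q ^ 2) ≤ 2 * Real.exp (-q ^ 2 / 2) := by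
      rw [neg_div]; exact h3
    have h4 : Real.exp (-q ^ 2) * (p + q) ≤ 5 * Real.exp (-q ^ 2 / 2) := by
      have : p + q ≤ q ^ 2 + 2 := by nlinarith [sq_nonneg (q - 1)]
      nlinarith
    nlinarith [mul_le_mul_of_nonneg_left h4 (sub_nonneg.2 hpq)]
  · nlinarith

lemma gauss_lip (p q : ℝ) (hp : 0 ≤ p) (hq : 0 ≤ q) :
    |Real.exp (-p ^ 2) - Real.exp (-q ^ 2)| ≤
      5 * |p - q| * (Real.exp (-p ^ 2 / 2) + Real.exp (-q ^ 2 / 2)) := by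
  have a1 := Real.exp_pos (-p ^ 2 / 2)
  have a2 := Real.exp_pos (-q ^ 2 / 2)
  rcases le_total q p with h | h
  · have h1 := gauss_lip_aux p q hq h
    have h2 : Real.exp (-p ^ 2) ≤ Real.exp (-q ^ 2) := by
      apply Real.exp_le_exp.2; nlinarith
    rw [abs_of_nonneg (sub_nonneg.2 h), abs_sub_comm, abs_of_nonneg (sub_nonneg.2 h2)]
    nlinarith [mul_nonneg (sub_nonneg.2 h) a1.le]
  · have h1 := gauss_lip_aux q p hp h
    have h2 : Real.exp (-q ^ 2) ≤ Real.exp (-p ^ 2) := by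
      apply Real.exp_le_exp.2; nlinarith
    rw [abs_sub_comm p q, abs_of_nonneg (sub_nonneg.2 h), abs_of_nonneg (sub_nonneg.2 h2)]
    nlinarith [mul_nonneg (sub_nonneg.2 h) a2.le]

/-- The free heat kernel. -/
def ker (a : ℝ) (u : E4) : ℝ := (1 / (4 * π * a) ^ 2) * Real.exp (-‖u‖ ^ 2 / (4 * a))

lemma ker_lip (a : ℝ) (ha : 0 < a) (u v : E4) :
    |ker a u - ker a v| ≤ (3 / (4 * π * a) ^ 2) * (‖u - v‖ / √a) *
      (Real.exp (-‖u‖ ^ 2 / (8 * a)) + Real.exp (-‖v‖ ^ 2 / (8 * a))) := by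
  have hs : 0 < √a := Real.sqrt_pos.2 ha
  have hsq : √a ^ 2 = a := Real.sq_sqrt ha.le
  have key := gauss_lip (‖u‖ / (2 * √a)) (‖v‖ / (2 * √a)) (by positivity) (by positivity)
  have e : ∀ w : E4, -(‖w‖ / (2 * √a)) ^ 2 = -‖w‖ ^ 2 / (4 * a) := by
    intro w; rw [div_pow, mul_pow, hsq]; ring
  have e' : ∀ w : E4, -(‖w‖ / (2 * √a)) ^ 2 / 2 = -‖w‖ ^ 2 / (8 * a) := by
    intro w; rw [e]; field_simp; ring
  rw [e', e', e, e] at key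
  have h2 : |‖u‖ / (2 * √a) - ‖v‖ / (2 * √a)| ≤ ‖u - v‖ / √a / 2 := by
    rw [← sub_div, abs_div, abs_of_pos (by positivity : 0 < 2 * √a), div_div,
      mul_comm (√a) 2]
    gcongr
    exact abs_norm_sub_norm_le u v
  unfold ker
  rw [← mul_sub, abs_mul, abs_of_pos (by positivity)]
  calc _ ≤ 1 / (4 * π * a) ^ 2 * (5 * (‖u - v‖ / √a / 2) *
      (Real.exp (-‖u‖ ^ 2 / (8 * a)) + Real.exp (-‖v‖ ^ 2 / (8 * a)))) := by
        gcongr; exact key.trans (by gcongr)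
    _ = (5 / 2 / (4 * π * a) ^ 2) * (‖u - v‖ / √a) *
      (Real.exp (-‖u‖ ^ 2 / (8 * a)) + Real.exp (-‖v‖ ^ 2 / (8 * a))) := by ring
    _ ≤ _ := by gcongr; norm_num

lemma ker_time (a b : ℝ) (ha : 0 < a) (hab : a ≤ b) (hb : b ≤ 2 * a) (u : E4) :
    |ker b u - ker a u| ≤ (4 / (4 * π * a) ^ 2) * ((b - a) / a) *
      Real.exp (-‖u‖ ^ 2 / (16 * a)) := by
  have hb0 : 0 < b := ha.trans_le hab
  set ρ := ‖u‖ ^ 2 / 4 with hρ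
  have hρ0 : 0 ≤ ρ := by positivity
  have ea : -‖u‖ ^ 2 / (4 * a) = -(ρ / a) := by rw [hρ]; field_simp
  have eb : -‖u‖ ^ 2 / (4 * b) = -(ρ / b) := by rw [hρ]; field_simp
  have ec : -‖u‖ ^ 2 / (16 * a) = -(ρ / (4 * a)) := by rw [hρ]; field_simp; ring
  have hrat : ρ / b ≤ ρ / a := by gcongr
  -- exponential comparison
  have hba : Real.exp (-(ρ / a)) ≤ Real.exp (-(ρ / b)) := Real.exp_le_exp.2 (by linarith)
  have hc0 : ρ / (4 * a) ≤ ρ / b / 2 := by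
    have e0 : ρ / b / 2 = ρ / (b * 2) := div_div _ _ _
    rw [e0]; exact div_le_div_of_nonneg_left hρ0 (by positivity) (by linarith)
  have hc1 : Real.exp (-(ρ / b / 2)) ≤ Real.exp (-(ρ / (4 * a))) :=
    Real.exp_le_exp.2 (by linarith)
  have hc2 : Real.exp (-(ρ / a)) ≤ Real.exp (-(ρ / (4 * a))) := by
    apply Real.exp_le_exp.2
    have : 0 ≤ ρ / b := by positivity
    linarith
  have hd : Real.exp (-(ρ / b)) - Real.exp (-(ρ / a)) ≤
      2 * ((b - a) / a) * Real.exp (-(ρ / (4 * a))) := by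
    have h1 := Real.add_one_le_exp (-(ρ / a - ρ / b))
    have e2 : Real.exp (-(ρ / a)) = Real.exp (-(ρ / b)) * Real.exp (-(ρ / a - ρ / b)) := by
      rw [← Real.exp_add]; congr 1; ring
    have e3 : ρ / a - ρ / b = ρ / b * ((b - a) / a) := by field_simp
    have h2 : Real.exp (-(ρ / b)) - Real.exp (-(ρ / a)) ≤
        (ρ / b * Real.exp (-(ρ / b))) * ((b - a) / a) := by
      rw [e3] at h1 e2
      rw [e2]
      have := mul_le_mul_of_nonneg_left h1 (Real.exp_pos (-(ρ / b))).le
      nlinarith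
    have h3 := exp_half_aux (ρ / b)
    have h5 : 0 ≤ (b - a) / a := div_nonneg (by linarith) ha.le
    calc _ ≤ _ := h2
      _ ≤ (2 * Real.exp (-(ρ / (4 * a)))) * ((b - a) / a) := by
          exact mul_le_mul_of_nonneg_right (by linarith) h5
      _ = _ := by ring
  -- prefactor comparison
  have hA : 1 / (4 * π * b) ^ 2 ≤ 1 / (4 * π * a) ^ 2 := by gcongr
  have hB : 1 / (4 * π * a) ^ 2 - 1 / (4 * π * b) ^ 2 ≤ 2 / (4 * π * a) ^ 2 * ((b - a) / a) := by
    have h : 1 - a ^ 2 / b ^ 2 ≤ 2 * ((b - a) / a) := by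
      rw [sub_le_iff_le_add, ← mul_div_assoc, div_add_div _ _ (by positivity) (by positivity),
        one_le_div (by positivity)]
      have : 0 ≤ b - a := by linarith
      have h1 : (b - a) * (b + a) * a ≤ 2 * (b - a) * b ^ 2 := by
        have : (b + a) * a ≤ 2 * b ^ 2 := by nlinarith
        nlinarith
      nlinarith
    calc _ = 1 / (4 * π * a) ^ 2 * (1 - a ^ 2 / b ^ 2) := by field_simp
      _ ≤ 1 / (4 * π * a) ^ 2 * (2 * ((b - a) / a)) := by gcongr
      _ = _ := by ring
  unfold ker
  rw [ea, eb, ec]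
  set A := 1 / (4 * π * a) ^ 2
  set B := 1 / (4 * π * b) ^ 2
  have hB0 : 0 ≤ B := by positivity
  have e4 : 4 / (4 * π * a) ^ 2 = 4 * A := by ring
  have e5 : 2 / (4 * π * a) ^ 2 = 2 * A := by ring
  rw [e4]; rw [e5] at hB
  have h5 : 0 ≤ (b - a) / a := div_nonneg (by linarith) ha.le
  have s1 : |B * Real.exp (-(ρ / b)) - A * Real.exp (-(ρ / a))| ≤
      B * (Real.exp (-(ρ / b)) - Real.exp (-(ρ / a))) + (A - B) * Real.exp (-(ρ / a)) := by
    have i1 := mul_nonneg hB0 (sub_nonneg.2 hba)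
    have i2 := mul_nonneg (sub_nonneg.2 hA) (Real.exp_pos (-(ρ / a))).le
    rw [abs_le]; constructor <;> nlinarith
  refine s1.trans ?_
  calc _ ≤ A * (2 * ((b - a) / a) * Real.exp (-(ρ / (4 * a)))) +
        (2 * A * ((b - a) / a)) * Real.exp (-(ρ / (4 * a))) := by
          gcongr
    _ = _ := by ring

/-- Reflection across the boundary hyperplane. -/
def refl4 (x : E4) : E4 := !₂[x 0, x 1, x 2, -x 3]

lemma refl4_norm (x y : E4) : ‖refl4 x - refl4 y‖ = ‖x - y‖ := by
  have : ‖refl4 x - refl4 y‖ ^ 2 = ‖x - y‖ ^ 2 := by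
    rw [EuclideanSpace.norm_sq_eq, EuclideanSpace.norm_sq_eq]
    simp [Fin.sum_univ_four, refl4]; ring
  exact (sq_eq_sq₀ (norm_nonneg _) (norm_nonneg _)).1 this

lemma heatK_eq (a : ℝ) (x z : E4) : heatK a x z = ker a (x - z) + ker a (refl4 x - z) := by
  unfold heatK ker
  rw [mul_add]
  congr 4
  rw [EuclideanSpace.norm_sq_eq]
  simp [Fin.sum_univ_four, refl4]; ring

/-- Inner (spatial) integral of the free kernel. -/
def Gam (g : E4 → ℝ) (y : E4) (a : ℝ) : ℝ := ∫ z in halfSpace, ker a (y - z) * g z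

lemma Gam_facts : ∃ C > (0 : ℝ), ∀ (r N : ℝ) (ξ : E4) (g : E4 → ℝ), 0 < r → 0 ≤ N →
    Measurable g → Adm g N r ξ →
    (∀ y a, 0 < a → IntegrableOn (fun z => ker a (y - z) * g z) halfSpace) ∧
    (∀ y a, 0 < a → |Gam g y a| ≤ C * (N / (a + r ^ 2))) ∧
    (∀ y y' a, 0 < a → |Gam g y' a - Gam g y a| ≤ C * (‖y' - y‖ / √a) * (N / (a + r ^ 2))) ∧
    (∀ y a b, 0 < a → a ≤ b → b ≤ 2 * a →
      |Gam g y b - Gam g y a| ≤ C * ((b - a) / a) * (N / (a + r ^ 2))) := by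
  obtain ⟨C, hC, H⟩ := gauss_weight
  refine ⟨100 * C, by positivity, ?_⟩
  intro r N ξ g hr hN hg hA
  have hpi : 1 ≤ π ^ 2 := by nlinarith [Real.pi_gt_three]
  have scal : ∀ a k : ℝ, 0 < a → 1 ≤ k →
      1 / (4 * π * a) ^ 2 * (C * N * ((k * a) ^ 2 / (k * a + r ^ 2))) ≤
        k ^ 2 / 16 * (C * (N / (a + r ^ 2))) := by
    intro a k ha hk
    have h1 : (k * a) ^ 2 / (k * a + r ^ 2) ≤ (k * a) ^ 2 / (a + r ^ 2) := by
      gcongr; nlinarith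
    have h2 : 1 / (4 * π * a) ^ 2 ≤ 1 / (16 * a ^ 2) := by
      apply one_div_le_one_div_of_le (by positivity)
      have : (4 * π * a) ^ 2 = π ^ 2 * (16 * a ^ 2) := by ring
      rw [this]
      exact le_mul_of_one_le_left (by positivity) hpi
    calc _ ≤ 1 / (16 * a ^ 2) * (C * N * ((k * a) ^ 2 / (a + r ^ 2))) := by gcongr
      _ = _ := by field_simp
  have I0 : ∀ y a, 0 < a → IntegrableOn (fun z => ker a (y - z) * g z) halfSpace := by
    intro y a ha
    have h := (H (4 * a) r N ξ y g (by positivity) hr hN hg hA).1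
    refine Integrable.mono' (h.const_mul (1 / (4 * π * a) ^ 2)) ?_ ?_
    · unfold ker; fun_prop
    · refine Filter.Eventually.of_forall fun z => ?_
      unfold ker
      rw [norm_mul, Real.norm_of_nonneg (by positivity), Real.norm_eq_abs]
      exact le_of_eq (by ring)
  have hQ : ∀ a, 0 < a → 0 ≤ N / (a + r ^ 2) := fun a ha => by positivity
  refine ⟨I0, ?_, ?_, ?_⟩
  · intro y a ha
    obtain ⟨h, h'⟩ := H (4 * a) r N ξ y g (by positivity) hr hN hg hA
    have := norm_integral_le_of_norm_le (f := fun z => ker a (y - z) * g z)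
      (h.const_mul (1 / (4 * π * a) ^ 2)) (Filter.Eventually.of_forall fun z => by
        unfold ker
        rw [norm_mul, Real.norm_of_nonneg (by positivity), Real.norm_eq_abs]
        exact le_of_eq (by ring))
    rw [integral_const_mul] at this
    refine (this.trans (mul_le_mul_of_nonneg_left h' (by positivity))).trans ?_
    refine (scal a 4 ha (by norm_num)).trans ?_
    have := mul_nonneg hC.le (hQ a ha)
    nlinarith
  · intro y y' a ha
    obtain ⟨h, h'⟩ := H (8 * a) r N ξ y g (by positivity) hr hN hg hA
    obtain ⟨k, k'⟩ := H (8 * a) r N ξ y' g (by positivity) hr hN hg hA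
    unfold Gam
    rw [← integral_sub (I0 y' a ha) (I0 y a ha)]
    have := norm_integral_le_of_norm_le (f := fun z => ker a (y' - z) * g z - ker a (y - z) * g z)
      ((k.add h).const_mul ((3 / (4 * π * a) ^ 2) * (‖y' - y‖ / √a)))
      (Filter.Eventually.of_forall fun z => by
        rw [← sub_mul, norm_mul, Real.norm_eq_abs, Real.norm_eq_abs]
        have := ker_lip a ha (y' - z) (y - z)
        rw [sub_sub_sub_cancel_right] at this
        refine (mul_le_mul_of_nonneg_right this (abs_nonneg _)).trans (le_of_eq ?_)
        simp only [Pi.add_apply]; ring)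
    rw [integral_const_mul] at this
    simp only [Pi.add_apply] at this
    rw [integral_add k h] at this
    refine (this.trans (mul_le_mul_of_nonneg_left (add_le_add k' h') (by positivity))).trans ?_
    have s := scal a 8 ha (by norm_num)
    have hn : 0 ≤ ‖y' - y‖ / √a := by positivity
    have s' := mul_le_mul_of_nonneg_left s hn
    have p := mul_nonneg hn (mul_nonneg hC.le (hQ a ha))
    calc _ = 6 * (‖y' - y‖ / √a *
          (1 / (4 * π * a) ^ 2 * (C * N * ((8 * a) ^ 2 / (8 * a + r ^ 2))))) := by ring
      _ ≤ 6 * (‖y' - y‖ / √a * (8 ^ 2 / 16 * (C * (N / (a + r ^ 2))))) := by gcongr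
      _ ≤ _ := by nlinarith
  · intro y a b ha hab hb
    obtain ⟨h, h'⟩ := H (16 * a) r N ξ y g (by positivity) hr hN hg hA
    unfold Gam
    rw [← integral_sub (I0 y b (ha.trans_le hab)) (I0 y a ha)]
    have hn : 0 ≤ (b - a) / a := div_nonneg (by linarith) ha.le
    have := norm_integral_le_of_norm_le (f := fun z => ker b (y - z) * g z - ker a (y - z) * g z)
      (h.const_mul ((4 / (4 * π * a) ^ 2) * ((b - a) / a)))
      (Filter.Eventually.of_forall fun z => by
        rw [← sub_mul, norm_mul, Real.norm_eq_abs, Real.norm_eq_abs]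
        have := ker_time a b ha hab hb (y - z)
        refine (mul_le_mul_of_nonneg_right this (abs_nonneg _)).trans (le_of_eq ?_)
        ring)
    rw [integral_const_mul] at this
    refine (this.trans (mul_le_mul_of_nonneg_left h' (by positivity))).trans ?_
    have s := scal a 16 ha (by norm_num)
    have p := mul_nonneg hn (mul_nonneg hC.le (hQ a ha))
    calc _ = 4 * ((b - a) / a *
          (1 / (4 * π * a) ^ 2 * (C * N * ((16 * a) ^ 2 / (16 * a + r ^ 2))))) := by ring
      _ ≤ 4 * ((b - a) / a * (16 ^ 2 / 16 * (C * (N / (a + r ^ 2))))) := by gcongr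
      _ ≤ _ := by nlinarith

/-- Inner (spatial) integral of the Neumann kernel. -/
def Fin4 (g : E4 → ℝ) (x : E4) (a : ℝ) : ℝ := ∫ z in halfSpace, heatK a x z * g z

lemma Fin4_facts : ∃ C > (0 : ℝ), ∀ (r N : ℝ) (ξ : E4) (g : E4 → ℝ), 0 < r → 0 ≤ N →
    Measurable g → Adm g N r ξ →
    (∀ y a, 0 < a → |Fin4 g y a| ≤ C * (N / (a + r ^ 2))) ∧
    (∀ y y' a, 0 < a → |Fin4 g y' a - Fin4 g y a| ≤ C * (‖y' - y‖ / √a) * (N / (a + r ^ 2))) ∧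
    (∀ y a b, 0 < a → a ≤ b → b ≤ 2 * a →
      |Fin4 g y b - Fin4 g y a| ≤ C * ((b - a) / a) * (N / (a + r ^ 2))) := by
  obtain ⟨C, hC, H⟩ := Gam_facts
  refine ⟨2 * C, by positivity, ?_⟩
  intro r N ξ g hr hN hg hA
  obtain ⟨h0, h1, h2, h3⟩ := H r N ξ g hr hN hg hA
  have e : ∀ y a, 0 < a → Fin4 g y a = Gam g y a + Gam g (refl4 y) a := by
    intro y a ha
    unfold Fin4 Gam
    rw [← integral_add (h0 y a ha) (h0 _ a ha)]
    congr 1; ext z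
    rw [heatK_eq, add_mul]
  refine ⟨?_, ?_, ?_⟩
  · intro y a ha
    rw [e y a ha]
    have := abs_add_le (Gam g y a) (Gam g (refl4 y) a)
    linarith [h1 y a ha, h1 (refl4 y) a ha]
  · intro y y' a ha
    rw [e y a ha, e y' a ha]
    have i1 := h2 y y' a ha
    have i2 := h2 (refl4 y) (refl4 y') a ha
    rw [refl4_norm] at i2
    rw [abs_le] at *
    constructor <;> linarith [i1.1, i1.2, i2.1, i2.2]
  · intro y a b ha hab hb
    rw [e y a ha, e y b (ha.trans_le hab)]
    have i1 := h3 y a b ha hab hb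
    have i2 := h3 (refl4 y) a b ha hab hb
    rw [abs_le] at *
    constructor <;> linarith [i1.1, i1.2, i2.1, i2.2]

/-- Standing parameter assumptions. -/
structure Par (ν ε β T : ℝ) : Prop where
  ν0 : 0 < ν
  ν1 : ν < 1 / 2
  ε0 : 0 < ε
  κ1 : ν * (1 + 2 * ε) < 1 / 2
  β0 : 0 < β
  β1 : β < 1 / 2
  T0 : 0 < T
  lT : Real.log T ≤ -(1 / ε + 1 / ν + 2)

/-- `μ₀` in terms of `σ = T - t`. -/
def mm (T σ : ℝ) : ℝ := |Real.log (2 * T)| * σ / (Real.log σ) ^ 2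

/-- The cutoff radius in terms of `σ = T - t`. -/
def rr (β T σ : ℝ) : ℝ := mm T σ * mm T σ ^ (-β)

section par
variable {ν ε β T : ℝ}

lemma Par.log_le (P : Par ν ε β T) {τ : ℝ} (h0 : 0 < τ) (h1 : τ ≤ T) :
    Real.log τ ≤ -(1 / ε + 1 / ν + 2) := (Real.log_le_log h0 h1).trans P.lT

lemma Par.abs_log (P : Par ν ε β T) {τ : ℝ} (h0 : 0 < τ) (h1 : τ ≤ T) :
    |Real.log τ| = -Real.log τ := by
  have := P.log_le h0 h1
  have a := P.ε0
  have b := P.ν0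
  have : 0 < 1 / ε + 1 / ν + 2 := by positivity
  rw [abs_of_neg]; linarith

lemma Par.two_le (P : Par ν ε β T) {τ : ℝ} (h0 : 0 < τ) (h1 : τ ≤ T) :
    2 ≤ |Real.log τ| ∧ 1 / ε ≤ |Real.log τ| ∧ 1 / ν ≤ |Real.log τ| := by
  have := P.log_le h0 h1
  have a : 0 < 1 / ε := by have := P.ε0; positivity
  have b : 0 < 1 / ν := by have := P.ν0; positivity
  rw [P.abs_log h0 h1]
  refine ⟨?_, ?_, ?_⟩ <;> linarith

lemma Par.le_one (P : Par ν ε β T) {τ : ℝ} (h0 : 0 < τ) (h1 : τ ≤ T) : τ ≤ 1 := by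
  have h := (P.two_le h0 h1).1
  rw [P.abs_log h0 h1] at h
  by_contra hh
  have := Real.log_pos (not_le.1 hh)
  linarith

lemma Par.log2T (P : Par ν ε β T) : 1 ≤ |Real.log (2 * T)| ∧ |Real.log (2 * T)| ≤ |Real.log T| := by
  have h := (P.two_le P.T0 le_rfl).1
  have e := P.abs_log P.T0 le_rfl
  have l2 : Real.log 2 ≤ 1 := by linarith [Real.log_two_lt_d9]
  have l2' : 0 ≤ Real.log 2 := Real.log_nonneg (by norm_num)
  rw [Real.log_mul (by norm_num) P.T0.ne', abs_of_nonpos (a := Real.log 2 + Real.log T) (by linarith)]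
  rw [e] at h ⊢
  constructor <;> linarith

lemma Par.log_mono (P : Par ν ε β T) {τ σ : ℝ} (h0 : 0 < τ) (h1 : τ ≤ σ) (h2 : σ ≤ T) :
    |Real.log σ| ≤ |Real.log τ| := by
  rw [P.abs_log h0 (h1.trans h2), P.abs_log (h0.trans_le h1) h2]
  linarith [Real.log_le_log h0 h1]

/-- Slow variation of the logarithm. -/
lemma Par.log_slow (P : Par ν ε β T) {τ σ δ : ℝ} (h0 : 0 < τ) (h1 : τ ≤ σ) (h2 : σ ≤ T)
    (hδ : 0 < δ) (hδ' : 1 / δ ≤ |Real.log σ|) :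
    |Real.log τ| ≤ |Real.log σ| * (σ / τ) ^ δ := by
  have hσ := h0.trans_le h1
  have hy : 0 ≤ Real.log (σ / τ) := Real.log_nonneg ((one_le_div h0).2 h1)
  have e : |Real.log τ| = |Real.log σ| + Real.log (σ / τ) := by
    rw [P.abs_log h0 (h1.trans h2), P.abs_log hσ h2, Real.log_div hσ.ne' h0.ne']; ring
  rw [e, Real.rpow_def_of_pos (by positivity)]
  have h3 := Real.add_one_le_exp (Real.log (σ / τ) * δ)
  have h4 : 1 ≤ |Real.log σ| * δ := by
    rw [div_le_iff₀ hδ] at hδ'; exact hδ'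
  calc _ ≤ |Real.log σ| * (Real.log (σ / τ) * δ + 1) := by nlinarith
    _ ≤ _ := by gcongr

lemma Par.mm_pos (P : Par ν ε β T) {τ : ℝ} (h0 : 0 < τ) (h1 : τ ≤ T) : 0 < mm T τ := by
  have a := P.log2T.1
  have b := (P.two_le h0 h1).1
  have c : Real.log τ ≠ 0 := by intro h; rw [h] at b; simp at b; linarith
  unfold mm; positivity

lemma mm_eq (T σ : ℝ) : mm T σ = |Real.log (2 * T)| * σ / |Real.log σ| ^ 2 := by
  unfold mm; rw [sq_abs]

lemma Par.mm_down (P : Par ν ε β T) {τ σ : ℝ} (h0 : 0 < σ) (h1 : σ ≤ τ) (h2 : τ ≤ T) :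
    mm T σ ≤ mm T τ * (σ / τ) := by
  have hτ := h0.trans_le h1
  have a := P.log_mono h0 h1 h2
  have b := (P.two_le hτ h2).1
  rw [mm_eq, mm_eq]
  calc _ ≤ |Real.log (2 * T)| * σ / |Real.log τ| ^ 2 := by gcongr
    _ = _ := by field_simp

lemma Par.mm_mono (P : Par ν ε β T) {τ σ : ℝ} (h0 : 0 < σ) (h1 : σ ≤ τ) (h2 : τ ≤ T) :
    mm T σ ≤ mm T τ := by
  have hτ := h0.trans_le h1
  refine (P.mm_down h0 h1 h2).trans ?_
  exact mul_le_of_le_one_right (P.mm_pos hτ h2).le ((div_le_one hτ).2 h1)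

lemma Par.mm_down_pow (P : Par ν ε β T) {τ σ : ℝ} (h0 : 0 < σ) (h1 : σ ≤ τ) (h2 : τ ≤ T) :
    mm T σ ^ ν ≤ mm T τ ^ ν * (σ / τ) ^ ν := by
  have hτ := h0.trans_le h1
  rw [← Real.mul_rpow (P.mm_pos hτ h2).le (by positivity)]
  exact Real.rpow_le_rpow (P.mm_pos h0 (h1.trans h2)).le (P.mm_down h0 h1 h2) P.ν0.le

lemma Par.mm_up_pow (P : Par ν ε β T) {τ σ : ℝ} (h0 : 0 < τ) (h1 : τ ≤ σ) (h2 : σ ≤ T) :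
    mm T σ ^ ν ≤ mm T τ ^ ν * (σ / τ) ^ (ν * (1 + 2 * ε)) := by
  have hσ := h0.trans_le h1
  have hτT := h1.trans h2
  have hq : 0 < σ / τ := by positivity
  have a := P.log_slow h0 h1 h2 P.ε0 (P.two_le hσ h2).2.1
  have b := (P.two_le hσ h2).1
  have b' := (P.two_le h0 hτT).1
  have key : mm T σ ≤ mm T τ * (σ / τ) ^ (1 + 2 * ε) := by
    have e : (σ / τ) ^ (1 + 2 * ε) = (σ / τ) * ((σ / τ) ^ ε) ^ 2 := by
      rw [Real.rpow_add hq, Real.rpow_one, ← Real.rpow_natCast, ← Real.rpow_mul hq.le]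
      congr 2; push_cast; ring
    rw [e, mm_eq, mm_eq, div_le_iff₀ (by positivity)]
    have a2 : |Real.log τ| ^ 2 ≤ (|Real.log σ| * (σ / τ) ^ ε) ^ 2 := by gcongr
    have : |Real.log (2 * T)| * τ / |Real.log τ| ^ 2 * (σ / τ * ((σ / τ) ^ ε) ^ 2) *
        |Real.log σ| ^ 2 = |Real.log (2 * T)| * σ *
          ((|Real.log σ| * (σ / τ) ^ ε) ^ 2 / |Real.log τ| ^ 2) := by
      field_simp
    rw [this]
    apply le_mul_of_one_le_right (by positivity)
    rw [one_le_div (by positivity)]; exact a2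
  have e2 : (σ / τ) ^ (ν * (1 + 2 * ε)) = ((σ / τ) ^ (1 + 2 * ε)) ^ ν := by
    rw [← Real.rpow_mul hq.le, mul_comm]
  rw [e2, ← Real.mul_rpow (P.mm_pos h0 hτT).le (by positivity)]
  exact Real.rpow_le_rpow (P.mm_pos hσ h2).le key P.ν0.le

lemma Par.mm_le (P : Par ν ε β T) {τ : ℝ} (h0 : 0 < τ) (h1 : τ ≤ T) : mm T τ ≤ τ := by
  have b := (P.two_le h0 h1).1
  have c := P.log2T.2.trans (P.log_mono h0 h1 le_rfl)
  rw [mm_eq, div_le_iff₀ (by positivity), mul_comm]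
  refine mul_le_mul_of_nonneg_left ?_ h0.le
  nlinarith

lemma Par.le_mm (P : Par ν ε β T) {τ : ℝ} (h0 : 0 < τ) (h1 : τ ≤ T) : τ ^ 3 ≤ mm T τ := by
  have b := (P.two_le h0 h1).1
  have c := P.log2T.1
  have d : |Real.log τ| ≤ 1 / τ := by
    rw [P.abs_log h0 h1, ← Real.log_inv, one_div]
    have := Real.log_le_sub_one_of_pos (inv_pos.2 h0)
    linarith
  rw [mm_eq, le_div_iff₀ (by positivity)]
  calc τ ^ 3 * |Real.log τ| ^ 2 ≤ τ ^ 3 * (1 / τ) ^ 2 := by gcongr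
    _ = τ := by field_simp
    _ ≤ _ := by nlinarith

lemma Par.rr_eq (P : Par ν ε β T) {τ : ℝ} (h0 : 0 < τ) (h1 : τ ≤ T) :
    rr β T τ = mm T τ ^ (1 - β) := by
  unfold rr
  rw [sub_eq_add_neg, Real.rpow_add (P.mm_pos h0 h1), Real.rpow_one]

lemma Par.rr_pos (P : Par ν ε β T) {τ : ℝ} (h0 : 0 < τ) (h1 : τ ≤ T) : 0 < rr β T τ := by
  rw [P.rr_eq h0 h1]; exact Real.rpow_pos_of_pos (P.mm_pos h0 h1) _

lemma Par.rr_mono (P : Par ν ε β T) {τ σ : ℝ} (h0 : 0 < σ) (h1 : σ ≤ τ) (h2 : τ ≤ T) :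
    rr β T σ ≤ rr β T τ := by
  rw [P.rr_eq h0 (h1.trans h2), P.rr_eq (h0.trans_le h1) h2]
  exact Real.rpow_le_rpow (P.mm_pos h0 (h1.trans h2)).le (P.mm_mono h0 h1 h2)
    (by linarith [P.β1])

lemma Par.rr_sq (P : Par ν ε β T) {τ : ℝ} (h0 : 0 < τ) (h1 : τ ≤ T) :
    rr β T τ ^ 2 = mm T τ ^ (2 - 2 * β) := by
  rw [P.rr_eq h0 h1, ← Real.rpow_natCast, ← Real.rpow_mul (P.mm_pos h0 h1).le]
  congr 1; push_cast; ring

lemma Par.rr_sq_le (P : Par ν ε β T) {τ : ℝ} (h0 : 0 < τ) (h1 : τ ≤ T) : rr β T τ ^ 2 ≤ τ := by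
  have a := P.mm_le h0 h1
  refine le_trans ?_ a
  rw [P.rr_sq h0 h1]
  conv_rhs => rw [← Real.rpow_one (mm T τ)]
  exact Real.rpow_le_rpow_of_exponent_ge (P.mm_pos h0 h1) (a.trans (P.le_one h0 h1))
    (by linarith [P.β1])

lemma Par.le_rr_sq (P : Par ν ε β T) {τ : ℝ} (h0 : 0 < τ) (h1 : τ ≤ T) :
    τ ^ 6 ≤ rr β T τ ^ 2 := by
  have a := P.mm_le h0 h1
  have : mm T τ ^ 2 ≤ rr β T τ ^ 2 := by
    rw [P.rr_sq h0 h1, ← Real.rpow_natCast]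
    refine Real.rpow_le_rpow_of_exponent_ge (P.mm_pos h0 h1) (a.trans (P.le_one h0 h1)) ?_
    push_cast; linarith [P.β0]
  refine le_trans ?_ this
  calc τ ^ 6 = (τ ^ 3) ^ 2 := by ring
    _ ≤ _ := by gcongr; exact P.le_mm h0 h1

lemma Par.log_quot (P : Par ν ε β T) {τ : ℝ} (h0 : 0 < τ) (h1 : τ ≤ T) :
    Real.log ((τ + rr β T τ ^ 2) / rr β T τ ^ 2) ≤ 6 * |Real.log τ| := by
  have hq : 0 < rr β T τ ^ 2 := by have := P.rr_pos h0 h1; positivity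
  have b := (P.two_le h0 h1).1
  have l2 : Real.log 2 ≤ 1 := by linarith [Real.log_two_lt_d9]
  calc _ ≤ Real.log ((2 * τ) / τ ^ 6) := by
        apply Real.log_le_log (by positivity)
        have := P.le_rr_sq h0 h1
        have := P.rr_sq_le h0 h1
        gcongr
        linarith
    _ = Real.log 2 + 5 * |Real.log τ| := by
        rw [P.abs_log h0 h1, Real.log_div (by positivity) (by positivity),
          Real.log_mul (by norm_num) h0.ne', Real.log_pow]
        push_cast; ring
    _ ≤ _ := by linarith

lemma Par.final_ii (P : Par ν ε β T) {τ : ℝ} (h0 : 0 < τ) (h1 : τ ≤ T) :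
    mm T τ ^ ν * |Real.log τ| ≤ τ ^ ν * |Real.log T| ^ ν * |Real.log τ| ^ (1 - 2 * ν) := by
  have b := (P.two_le h0 h1).1
  have hL : 0 < |Real.log τ| := by linarith
  have e : mm T τ ^ ν = |Real.log (2 * T)| ^ ν * τ ^ ν / |Real.log τ| ^ (2 * ν) := by
    rw [mm_eq, Real.div_rpow (by positivity) (by positivity), Real.mul_rpow (by positivity) h0.le,
      ← Real.rpow_natCast |Real.log τ| 2, ← Real.rpow_mul hL.le]
    norm_num
  rw [e, Real.rpow_sub hL, Real.rpow_one]
  have := Real.rpow_le_rpow (abs_nonneg _) P.log2T.2 P.ν0.le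
  calc _ = τ ^ ν * |Real.log (2 * T)| ^ ν * (|Real.log τ| / |Real.log τ| ^ (2 * ν)) := by ring
    _ ≤ _ := by gcongr

lemma Par.final_i (P : Par ν ε β T) {τ : ℝ} (h0 : 0 < τ) (h1 : τ ≤ T) :
    τ ^ ν * |Real.log T| ^ ν * |Real.log τ| ^ (1 - 2 * ν) ≤ T ^ ν * |Real.log T| ^ (1 - ν) := by
  have hT := P.T0
  have b := (P.two_le hT le_rfl)
  have hL : 0 < |Real.log T| := by linarith [b.1]
  have hq : 1 ≤ T / τ := (one_le_div h0).2 h1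
  have hν := P.ν0
  have hν1 := P.ν1
  have a := P.log_slow h0 h1 le_rfl P.ν0 b.2.2
  have c := Real.rpow_le_rpow (abs_nonneg _) a (by linarith : 0 ≤ 1 - 2 * ν)
  rw [Real.mul_rpow hL.le (by positivity), ← Real.rpow_mul (by positivity)] at c
  have d : (T / τ) ^ (ν * (1 - 2 * ν)) ≤ (T / τ) ^ ν :=
    Real.rpow_le_rpow_of_exponent_le hq (by nlinarith)
  calc _ ≤ τ ^ ν * |Real.log T| ^ ν * (|Real.log T| ^ (1 - 2 * ν) * (T / τ) ^ ν) := by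
        gcongr; exact c.trans (by gcongr)
    _ = (τ ^ ν * (T / τ) ^ ν) * (|Real.log T| ^ ν * |Real.log T| ^ (1 - 2 * ν)) := by ring
    _ = _ := by
        rw [← Real.mul_rpow h0.le (by positivity), ← Real.rpow_add hL, mul_div_cancel₀ _ h0.ne']
        congr 2; ring

/-- Profile bound away from the singular time. -/
lemma Par.prof_far (P : Par ν ε β T) {τ a e : ℝ} (h0 : 0 < τ) (he : 0 < e) (hea : e ≤ a)
    (heτ : e ≤ τ) (h2 : τ + a ≤ T) :
    mm T (τ + a) ^ ν / (a + rr β T (τ + a) ^ 2) ≤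
      2 * mm T τ ^ ν * (a / e) ^ (ν * (1 + 2 * ε)) / a := by
  have ha : 0 < a := he.trans_le hea
  have hκ : 0 < ν * (1 + 2 * ε) := by have := P.ν0; have := P.ε0; positivity
  have hm : 0 ≤ mm T τ ^ ν := Real.rpow_nonneg (P.mm_pos h0 (by linarith)).le _
  have u := P.mm_up_pow h0 (by linarith : τ ≤ τ + a) h2
  have v : ((τ + a) / τ) ^ (ν * (1 + 2 * ε)) ≤ 2 * (a / e) ^ (ν * (1 + 2 * ε)) := by
    have w : (τ + a) / τ ≤ 2 * (a / e) := by
      rw [add_div, div_self h0.ne']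
      have w1 : 1 ≤ a / e := (one_le_div he).2 hea
      have w2 : a / τ ≤ a / e := by gcongr
      linarith
    calc _ ≤ (2 * (a / e)) ^ (ν * (1 + 2 * ε)) := by gcongr
      _ = 2 ^ (ν * (1 + 2 * ε)) * (a / e) ^ (ν * (1 + 2 * ε)) := by
          rw [Real.mul_rpow (by norm_num) (by positivity)]
      _ ≤ _ := by
          gcongr
          conv_rhs => rw [← Real.rpow_one 2]
          exact Real.rpow_le_rpow_of_exponent_le (by norm_num) (by linarith [P.κ1])
  calc _ ≤ mm T (τ + a) ^ ν / a := by
        gcongr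
        · exact Real.rpow_nonneg (P.mm_pos (by linarith) h2).le _
        · nlinarith [sq_nonneg (rr β T (τ + a))]
    _ ≤ (mm T τ ^ ν * (2 * (a / e) ^ (ν * (1 + 2 * ε)))) / a := by
        gcongr; exact u.trans (by gcongr)
    _ = _ := by ring

/-- Profile bound close to the evaluation time. -/
lemma Par.prof_near (P : Par ν ε β T) {τ a : ℝ} (h0 : 0 < τ) (ha : 0 < a) (haτ : a ≤ τ)
    (h2 : τ + a ≤ T) :
    mm T (τ + a) ^ ν / (a + rr β T (τ + a) ^ 2) ≤ 2 * mm T τ ^ ν / (a + rr β T τ ^ 2) := by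
  have hκ : 0 < ν * (1 + 2 * ε) := by have := P.ν0; have := P.ε0; positivity
  have hm : 0 ≤ mm T τ ^ ν := Real.rpow_nonneg (P.mm_pos h0 (by linarith)).le _
  have hm' : 0 ≤ mm T (τ + a) ^ ν := Real.rpow_nonneg (P.mm_pos (by linarith) h2).le _
  have u := P.mm_up_pow h0 (by linarith : τ ≤ τ + a) h2
  have hr := P.rr_mono h0 (by linarith : τ ≤ τ + a) h2
  have hr0 := P.rr_pos h0 (by linarith)
  have v : ((τ + a) / τ) ^ (ν * (1 + 2 * ε)) ≤ 2 := by
    have w : (τ + a) / τ ≤ 2 := by rw [div_le_iff₀ h0]; linarith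
    calc _ ≤ (2 : ℝ) ^ (ν * (1 + 2 * ε)) := by gcongr
      _ ≤ _ := by
          conv_rhs => rw [← Real.rpow_one 2]
          exact Real.rpow_le_rpow_of_exponent_le (by norm_num) (by linarith [P.κ1])
  have u2 : mm T (τ + a) ^ ν ≤ 2 * mm T τ ^ ν := by
    refine u.trans ?_
    rw [mul_comm]; gcongr
  gcongr

end par

/-- Splitting bound for a time integral. -/
lemma int_bound (f h1 h2 : ℝ → ℝ) (t c : ℝ) (ht : 0 < t) (hc : 0 < c)
    (p1 : ∀ a, 0 < a → a ≤ c → 0 ≤ h1 a) (p2 : ∀ a, c < a → 0 ≤ h2 a)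
    (i1 : IntegrableOn h1 (Ioc 0 c)) (i2 : IntegrableOn h2 (Ioi c))
    (b1 : ∀ s ∈ Ioo 0 t, t - s ≤ c → |f s| ≤ h1 (t - s))
    (b2 : ∀ s ∈ Ioo 0 t, c < t - s → |f s| ≤ h2 (t - s)) :
    |∫ s in (0 : ℝ)..t, f s| ≤ (∫ a in Ioc 0 c, h1 a) + ∫ a in Ioi c, h2 a := by
  classical
  set h : ℝ → ℝ := (Iic c).piecewise h1 h2 with hh
  have e1 : ∀ a ≤ c, h a = h1 a := fun a ha => piecewise_eq_of_mem _ _ _ ha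
  have e2 : ∀ a, c < a → h a = h2 a := fun a ha =>
    piecewise_eq_of_notMem _ _ _ (by simpa using ha)
  have j1 : IntegrableOn h (Ioc 0 c) :=
    i1.congr_fun (fun a ha => (e1 a ha.2).symm) measurableSet_Ioc
  have j2 : IntegrableOn h (Ioi c) := i2.congr_fun (fun a ha => (e2 a ha).symm) measurableSet_Ioi
  have j : IntegrableOn h (Ioi 0) := by
    rw [← Ioc_union_Ioi_eq_Ioi hc.le]; exact j1.union j2
  have hpos : ∀ a, 0 < a → 0 ≤ h a := by
    intro a ha
    rcases le_or_gt a c with hac | hac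
    · rw [e1 a hac]; exact p1 a ha hac
    · rw [e2 a hac]; exact p2 a hac
  have jt : IntervalIntegrable h volume 0 t := by
    rw [intervalIntegrable_iff_integrableOn_Ioc_of_le ht.le]
    exact j.mono_set Ioc_subset_Ioi_self
  have jt' : IntervalIntegrable (fun s => h (t - s)) volume 0 t := by
    have := (jt.comp_sub_left t (by simp)).symm
    simpa using this
  have hle := intervalIntegral.norm_integral_le_of_norm_le (f := f) (g := fun s => h (t - s))
    (μ := volume) ht.le (by
      have : ∀ᵐ s : ℝ, s ≠ t := by simp [ae_iff, measure_singleton]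
      filter_upwards [this] with s hs hs'
      have hs2 : s ∈ Ioo 0 t := ⟨hs'.1, lt_of_le_of_ne hs'.2 hs⟩
      rcases le_or_gt (t - s) c with hac | hac
      · rw [e1 _ hac]; exact b1 s hs2 hac
      · rw [e2 _ hac]; exact b2 s hs2 hac) jt'
  have hI : ∫ s in (0 : ℝ)..t, h (t - s) = ∫ a in Ioc 0 t, h a := by
    rw [intervalIntegral.integral_comp_sub_left (fun s => h s) t, sub_self, sub_zero,
      intervalIntegral.integral_of_le ht.le]
  rw [hI] at hle
  calc _ ≤ ∫ a in Ioc 0 t, h a := hle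
    _ ≤ ∫ a in Ioi 0, h a := by
        refine setIntegral_mono_set j ?_ (Filter.Eventually.of_forall Ioc_subset_Ioi_self)
        rw [Filter.EventuallyLE, ae_restrict_iff' measurableSet_Ioi]
        exact Filter.Eventually.of_forall fun a ha => hpos a ha
    _ = (∫ a in Ioc 0 c, h a) + ∫ a in Ioi c, h a := by
        rw [← Ioc_union_Ioi_eq_Ioi hc.le, setIntegral_union (Ioc_disjoint_Ioi le_rfl)
          measurableSet_Ioi j1 j2]
    _ = _ := by
        rw [setIntegral_congr_fun measurableSet_Ioc (fun a ha => e1 a ha.2),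
          setIntegral_congr_fun measurableSet_Ioi (fun a ha => e2 a ha)]

section core
variable {ν ε β T C M : ℝ} {Φ : E4 → ℝ → ℝ → ℝ}

lemma core_T_maj (P : Par ν ε β T) (hC : 0 < C) (hM : 0 < M)
    (hb : ∀ x a s, s ∈ Ioo 0 T → 0 < a →
      |Φ x a s| ≤ C * (M * mm T (T - s) ^ ν / (a + rr β T (T - s) ^ 2)))
    (x : E4) (t : ℝ) (ht0 : 0 ≤ t) (s : ℝ) (hs : s ∈ Ioo t T) :
    |Φ x (T - s) s| ≤ C * M * mm T (T - t) ^ ν * (T - t) ^ (-ν) * (T - s) ^ (ν - 1) := by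
  have hσ : 0 < T - s := by linarith [hs.2]
  have hτ : 0 < T - t := by linarith [hs.1]
  have h1 := hb x (T - s) s ⟨by linarith [hs.1], hs.2⟩ hσ
  have h2 := P.mm_down_pow hσ (by linarith [hs.1] : T - s ≤ T - t) (by linarith)
  have hr := sq_nonneg (rr β T (T - s))
  have hm : 0 ≤ mm T (T - s) ^ ν := Real.rpow_nonneg (P.mm_pos hσ (by linarith [hs.1])).le _
  calc _ ≤ _ := h1
    _ ≤ C * (M * (mm T (T - t) ^ ν * ((T - s) / (T - t)) ^ ν) / (T - s)) := by
        gcongr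
        · exact mul_nonneg hM.le (hm.trans h2)
        · linarith
    _ = _ := by
        rw [Real.div_rpow hσ.le hτ.le, Real.rpow_neg hτ.le, Real.rpow_sub hσ, Real.rpow_one]
        ring

lemma maj_int (hν : 0 < ν) (K t : ℝ) :
    IntervalIntegrable (fun s => K * (T - s) ^ (ν - 1)) volume t T := by
  have h : IntervalIntegrable (fun y : ℝ => y ^ (ν - 1)) volume 0 (T - t) :=
    intervalIntegral.intervalIntegrable_rpow' (by linarith)
  have := (h.comp_sub_left T (by simp)).symm
  simp only [sub_sub_cancel, sub_zero] at this
  exact this.const_mul K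

lemma ae_ne_right (T : ℝ) : ∀ᵐ s : ℝ, s ≠ T := by simp [ae_iff, measure_singleton]

lemma core_T_int (P : Par ν ε β T) (hC : 0 < C) (hM : 0 < M)
    (hb : ∀ x a s, s ∈ Ioo 0 T → 0 < a →
      |Φ x a s| ≤ C * (M * mm T (T - s) ^ ν / (a + rr β T (T - s) ^ 2)))
    (hm : ∀ x t, Measurable fun s => Φ x (t - s) s) (x : E4) :
    IntervalIntegrable (fun s => Φ x (T - s) s) volume 0 T := by
  refine (maj_int (T := T) P.ν0 (C * M * mm T (T - 0) ^ ν * (T - 0) ^ (-ν)) 0).mono_fun'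
    (hm x T).aestronglyMeasurable ?_
  rw [uIoc_of_le P.T0.le, Filter.EventuallyLE, ae_restrict_iff' measurableSet_Ioc]
  filter_upwards [ae_ne_right T] with s hs hs'
  exact core_T_maj P hC hM hb x 0 le_rfl s ⟨hs'.1, lt_of_le_of_ne hs'.2 hs⟩

lemma core_T (P : Par ν ε β T) (hC : 0 < C) (hM : 0 < M)
    (hb : ∀ x a s, s ∈ Ioo 0 T → 0 < a →
      |Φ x a s| ≤ C * (M * mm T (T - s) ^ ν / (a + rr β T (T - s) ^ 2)))
    (x : E4) (t : ℝ) (ht0 : 0 ≤ t) (htT : t < T) :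
    |∫ s in t..T, Φ x (T - s) s| ≤ C * M * mm T (T - t) ^ ν / ν := by
  have hτ : 0 < T - t := by linarith
  have h := intervalIntegral.norm_integral_le_of_norm_le (f := fun s => Φ x (T - s) s)
    (μ := volume) htT.le (by
      filter_upwards [ae_ne_right T] with s hs hs'
      exact core_T_maj P hC hM hb x t ht0 s ⟨hs'.1, lt_of_le_of_ne hs'.2 hs⟩)
    (maj_int P.ν0 (C * M * mm T (T - t) ^ ν * (T - t) ^ (-ν)) t)
  rw [intervalIntegral.integral_const_mul,
    intervalIntegral.integral_comp_sub_left (fun y : ℝ => y ^ (ν - 1)) T, sub_self,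
    integral_rpow (Or.inl (by linarith [P.ν0]))] at h
  refine h.trans (le_of_eq ?_)
  have hν := P.ν0
  rw [sub_add_cancel, Real.zero_rpow P.ν0.ne', Real.rpow_neg hτ.le]
  have : (T - t) ^ ν ≠ 0 := (Real.rpow_pos_of_pos hτ _).ne'
  field_simp
  ring

lemma core_t_int (P : Par ν ε β T) (hC : 0 < C) (hM : 0 < M)
    (hb : ∀ x a s, s ∈ Ioo 0 T → 0 < a →
      |Φ x a s| ≤ C * (M * mm T (T - s) ^ ν / (a + rr β T (T - s) ^ 2)))
    (hm : ∀ x t, Measurable fun s => Φ x (t - s) s) (x : E4) (t : ℝ) (ht : t ∈ Ioo 0 T) :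
    IntervalIntegrable (fun s => Φ x (t - s) s) volume 0 t := by
  have hτ : 0 < T - t := by linarith [ht.2]
  refine (intervalIntegrable_const (c := C * (M * mm T T ^ ν / rr β T (T - t) ^ 2))).mono_fun'
    (hm x t).aestronglyMeasurable ?_
  rw [uIoc_of_le ht.1.le, Filter.EventuallyLE, ae_restrict_iff' measurableSet_Ioc]
  filter_upwards [ae_ne_right t] with s hs hs'
  have hst : s < t := lt_of_le_of_ne hs'.2 hs
  have h := hb x (t - s) s ⟨hs'.1, by linarith [ht.2]⟩ (by linarith)
  have hr := P.rr_mono hτ (by linarith : T - t ≤ T - s) (by linarith [hs'.1])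
  have hr0 := P.rr_pos hτ (by linarith [ht.1])
  have m1 := P.mm_mono (by linarith : 0 < T - s) (by linarith [hs'.1] : T - s ≤ T) le_rfl
  have m0 := P.mm_pos (by linarith : 0 < T - s) (by linarith [hs'.1] : T - s ≤ T)
  refine h.trans ?_
  have := Real.rpow_le_rpow m0.le m1 P.ν0.le
  have m2 : 0 ≤ mm T T ^ ν := Real.rpow_nonneg (m0.le.trans m1) _
  have sq : rr β T (T - t) ^ 2 ≤ t - s + rr β T (T - s) ^ 2 := by
    have : rr β T (T - t) ^ 2 ≤ rr β T (T - s) ^ 2 := by gcongr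
    linarith
  gcongr

lemma core_ii (P : Par ν ε β T) (hC : 0 < C) (hM : 0 < M)
    (hb : ∀ x a s, s ∈ Ioo 0 T → 0 < a →
      |Φ x a s| ≤ C * (M * mm T (T - s) ^ ν / (a + rr β T (T - s) ^ 2)))
    (htd : ∀ x a b s, s ∈ Ioo 0 T → 0 < a → a ≤ b → b ≤ 2 * a →
      |Φ x b s - Φ x a s| ≤ C * ((b - a) / a) *
        (M * mm T (T - s) ^ ν / (a + rr β T (T - s) ^ 2)))
    (hm : ∀ x t, Measurable fun s => Φ x (t - s) s) (x : E4) (t : ℝ) (ht : t ∈ Ioo 0 T) :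
    |(∫ s in (0 : ℝ)..t, Φ x (t - s) s) - ∫ s in (0 : ℝ)..T, Φ x (T - s) s| ≤
      C * (28 + 1 / ν) * M * (mm T (T - t) ^ ν * |Real.log (T - t)|) := by
  have hτ : 0 < T - t := by linarith [ht.2]
  have hτT : T - t ≤ T := by linarith [ht.1]
  set τ := T - t with hτdef
  set κ := ν * (1 + 2 * ε) with hκ
  have hκ1 : κ < 1 / 2 := P.κ1
  set m := mm T τ ^ ν with hmdef
  have hm0 : 0 ≤ m := Real.rpow_nonneg (P.mm_pos hτ hτT).le _
  set q := rr β T τ ^ 2 with hqdef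
  have hq : 0 < q := by have := P.rr_pos hτ hτT; positivity
  have IT := core_T_int P hC hM hb hm x
  have IT1 : IntervalIntegrable (fun s => Φ x (T - s) s) volume 0 t :=
    IT.mono_set (by rw [uIcc_of_le ht.1.le, uIcc_of_le P.T0.le]; exact Icc_subset_Icc_right ht.2.le)
  have IT2 : IntervalIntegrable (fun s => Φ x (T - s) s) volume t T :=
    IT.mono_set (by rw [uIcc_of_le ht.2.le, uIcc_of_le P.T0.le]; exact Icc_subset_Icc_left ht.1.le)
  have It := core_t_int P hC hM hb hm x t ht
  rw [← intervalIntegral.integral_add_adjacent_intervals IT1 IT2, ← sub_sub,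
    ← intervalIntegral.integral_sub It IT1]
  have hT := core_T P hC hM hb x t ht.1.le ht.2
  have c1 : ContinuousOn (fun a : ℝ => 4 * C * M * m * (a + q)⁻¹) (Icc 0 τ) := by
    refine continuousOn_const.mul (ContinuousOn.inv₀ (by fun_prop) ?_)
    intro a ha; have := ha.1; positivity
  have main := int_bound (fun s => Φ x (t - s) s - Φ x (T - s) s)
    (fun a => 4 * C * M * m * (a + q)⁻¹)
    (fun a => 2 * C * M * m * τ ^ (1 - κ) * a ^ (κ - 2)) t τ ht.1 hτ
    (fun a h _ => by positivity)
    (fun a h => by have : 0 < a := hτ.trans h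
                   positivity)
    (c1.integrableOn_Icc.mono_set Ioc_subset_Icc_self)
    ((integrableOn_Ioi_rpow_of_lt (by linarith) hτ).const_mul _)
    (by
      intro s hs hsτ
      have ha : 0 < t - s := by linarith [hs.2]
      have hsT : s ∈ Ioo 0 T := ⟨hs.1, hs.2.trans ht.2⟩
      have e : T - s = τ + (t - s) := by rw [hτdef]; ring
      have hle : τ + (t - s) ≤ T := by rw [← e]; linarith [hs.1]
      have b1 := hb x (t - s) s hsT ha
      have b2 := hb x (T - s) s hsT (by linarith)
      have pn := P.prof_near hτ ha hsτ hle
      rw [← e] at pn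
      have hmσ : 0 ≤ mm T (T - s) ^ ν :=
        Real.rpow_nonneg (P.mm_pos (by linarith) (by linarith [hs.1])).le _
      have b3 : mm T (T - s) ^ ν / (T - s + rr β T (T - s) ^ 2) ≤
          mm T (T - s) ^ ν / (t - s + rr β T (T - s) ^ 2) := by
        have := sq_nonneg (rr β T (T - s))
        gcongr; exact ht.2.le
      have k1 : ∀ y, C * (M * mm T (T - s) ^ ν / y) = C * M * (mm T (T - s) ^ ν / y) :=
        fun y => by ring
      rw [k1] at b1 b2
      have hCM : 0 < C * M := by positivity
      have d1 := b1.trans (mul_le_mul_of_nonneg_left pn hCM.le)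
      have d2 := b2.trans (mul_le_mul_of_nonneg_left (b3.trans pn) hCM.le)
      calc _ ≤ _ := abs_sub _ _
        _ ≤ _ := add_le_add d1 d2
        _ = _ := by rw [div_eq_mul_inv]; ring)
    (by
      intro s hs hsτ
      have ha : 0 < t - s := by linarith [hs.2]
      have hsT : s ∈ Ioo 0 T := ⟨hs.1, hs.2.trans ht.2⟩
      have e : T - s = τ + (t - s) := by rw [hτdef]; ring
      have hle : τ + (t - s) ≤ T := by rw [← e]; linarith [hs.1]
      have b1 := htd x (t - s) (T - s) s hsT ha (by linarith) (by linarith)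
      have pf := P.prof_far hτ hτ hsτ.le le_rfl hle
      rw [← e] at pf
      have e2 : T - s - (t - s) = τ := by rw [hτdef]; ring
      rw [e2, abs_sub_comm] at b1
      refine b1.trans ?_
      calc _ = C * M * (τ / (t - s)) * (mm T (T - s) ^ ν / (t - s + rr β T (T - s) ^ 2)) := by ring
        _ ≤ C * M * (τ / (t - s)) * (2 * m * ((t - s) / τ) ^ κ / (t - s)) := by gcongr
        _ = _ := by
          rw [Real.div_rpow ha.le hτ.le, Real.rpow_sub hτ, Real.rpow_sub ha, Real.rpow_one,
            show (2 : ℝ) = ((2 : ℕ) : ℝ) by norm_num, Real.rpow_natCast]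
          have : τ ^ κ ≠ 0 := (Real.rpow_pos_of_pos hτ _).ne'
          field_simp)
  have v1 : ∫ a in Ioc 0 τ, 4 * C * M * m * (a + q)⁻¹ = 4 * C * M * m * Real.log ((τ + q) / q) := by
    rw [← intervalIntegral.integral_of_le hτ.le, intervalIntegral.integral_const_mul,
      intervalIntegral.integral_comp_add_right (fun y : ℝ => y⁻¹) q, zero_add,
      integral_inv_of_pos hq (by positivity)]
  have v2 : ∫ a in Ioi τ, 2 * C * M * m * τ ^ (1 - κ) * a ^ (κ - 2) ≤ 4 * C * M * m := by
    rw [integral_const_mul, integral_Ioi_rpow_of_lt (by linarith) hτ]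
    have e : 2 * C * M * m * τ ^ (1 - κ) * (-τ ^ (κ - 2 + 1) / (κ - 2 + 1)) =
        2 * C * M * m * (1 / (1 - κ)) := by
      have e1 : κ - 2 + 1 = -(1 - κ) := by ring
      rw [e1, Real.rpow_neg hτ.le]
      have : τ ^ (1 - κ) ≠ 0 := (Real.rpow_pos_of_pos hτ _).ne'
      have : 1 - κ ≠ 0 := by linarith
      field_simp
    rw [e]
    have : 1 / (1 - κ) ≤ 2 := by rw [div_le_iff₀ (by linarith)]; linarith
    calc _ ≤ 2 * C * M * m * 2 := by gcongr
      _ = _ := by ring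
  have lq := P.log_quot hτ hτT
  rw [← hqdef] at lq
  have L := (P.two_le hτ hτT).1
  have hν := P.ν0
  have tri := abs_sub (∫ s in (0 : ℝ)..t, (Φ x (t - s) s - Φ x (T - s) s))
    (∫ s in t..T, Φ x (T - s) s)
  have hX : 0 ≤ C * M * m := by positivity
  have w1 : 4 * C * M * m * Real.log ((τ + q) / q) ≤ 24 * (C * M * m) * |Real.log τ| := by
    calc _ ≤ 4 * C * M * m * (6 * |Real.log τ|) := by gcongr
      _ = _ := by ring
  have w2 : C * M * m ≤ C * M * m * |Real.log τ| := le_mul_of_one_le_right hX (by linarith)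
  have w3 : C * M * m / ν ≤ C * M * m * |Real.log τ| / ν := by gcongr
  rw [v1] at main
  calc _ ≤ 24 * (C * M * m) * |Real.log τ| + 4 * (C * M * m * |Real.log τ|) +
        C * M * m * |Real.log τ| / ν := by linarith
    _ = _ := by ring

lemma core_iii (P : Par ν ε β T) (hC : 0 < C) (hM : 0 < M)
    (hb : ∀ x a s, s ∈ Ioo 0 T → 0 < a →
      |Φ x a s| ≤ C * (M * mm T (T - s) ^ ν / (a + rr β T (T - s) ^ 2)))
    (hl : ∀ x x' a s, s ∈ Ioo 0 T → 0 < a →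
      |Φ x' a s - Φ x a s| ≤ C * (‖x' - x‖ / √a) *
        (M * mm T (T - s) ^ ν / (a + rr β T (T - s) ^ 2)))
    (hm : ∀ x t, Measurable fun s => Φ x (t - s) s) (x x' : E4) (t : ℝ) (ht : t ∈ Ioo 0 T) :
    |(∫ s in (0 : ℝ)..t, Φ x' (t - s) s) - ∫ s in (0 : ℝ)..t, Φ x (t - s) s| ≤
      C * (4 + 2 / (1 / 2 - ν * (1 + 2 * ε))) * M * (mm T (T - t) ^ ν / rr β T (T - t)) *
        ‖x' - x‖ := by
  have hτ : 0 < T - t := by linarith [ht.2]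
  have hτT : T - t ≤ T := by linarith [ht.1]
  set τ := T - t with hτdef
  set κ := ν * (1 + 2 * ε) with hκ
  have hκ1 : κ < 1 / 2 := P.κ1
  set m := mm T τ ^ ν with hmdef
  have hm0 : 0 ≤ m := Real.rpow_nonneg (P.mm_pos hτ hτT).le _
  set r := rr β T τ with hrdef
  have hr : 0 < r := P.rr_pos hτ hτT
  have hqτ : r ^ 2 ≤ τ := P.rr_sq_le hτ hτT
  set q := r ^ 2 with hqdef
  have hq : 0 < q := by positivity
  have hqr : q ^ (1 / 2 : ℝ) = r := by
    rw [← Real.sqrt_eq_rpow, hqdef, Real.sqrt_sq hr.le]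
  have I1 := core_t_int P hC hM hb hm x t ht
  have I2 := core_t_int P hC hM hb hm x' t ht
  rw [← intervalIntegral.integral_sub I2 I1]
  set D := ‖x' - x‖ with hD
  have hD0 : 0 ≤ D := norm_nonneg _
  have sq : ∀ a : ℝ, 0 < a → D / √a = D * a ^ (-(1 / 2) : ℝ) := by
    intro a ha
    rw [Real.rpow_neg ha.le, ← Real.sqrt_eq_rpow, div_eq_mul_inv]
  have main := int_bound (fun s => Φ x' (t - s) s - Φ x (t - s) s)
    (fun a => 2 * C * M * m * D / q * a ^ (-(1 / 2) : ℝ))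
    (fun a => 2 * C * M * m * D * q ^ (-κ) * a ^ (κ - 3 / 2)) t q ht.1 hq
    (fun a h _ => by positivity)
    (fun a h => by have : 0 < a := hq.trans h
                   positivity)
    (by
      have := (intervalIntegral.intervalIntegrable_rpow' (a := 0) (b := q)
        (by norm_num : (-1 : ℝ) < -(1 / 2))).const_mul (2 * C * M * m * D / q)
      rwa [intervalIntegrable_iff_integrableOn_Ioc_of_le hq.le] at this)
    ((integrableOn_Ioi_rpow_of_lt (by linarith) hq).const_mul _)
    (by
      intro s hs hsq
      have ha : 0 < t - s := by linarith [hs.2]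
      have hsT : s ∈ Ioo 0 T := ⟨hs.1, hs.2.trans ht.2⟩
      have e : T - s = τ + (t - s) := by rw [hτdef]; ring
      have hle : τ + (t - s) ≤ T := by rw [← e]; linarith [hs.1]
      have b1 := hl x x' (t - s) s hsT ha
      have pn := P.prof_near hτ ha (hsq.trans hqτ) hle
      rw [← e] at pn
      rw [sq _ ha] at b1
      refine b1.trans ?_
      have pn2 : mm T (T - s) ^ ν / (t - s + rr β T (T - s) ^ 2) ≤ 2 * m / q := by
        refine pn.trans ?_
        gcongr
        linarith
      calc _ = C * M * D * (t - s) ^ (-(1 / 2) : ℝ) *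
            (mm T (T - s) ^ ν / (t - s + rr β T (T - s) ^ 2)) := by ring
        _ ≤ C * M * D * (t - s) ^ (-(1 / 2) : ℝ) * (2 * m / q) := by gcongr
        _ = _ := by ring)
    (by
      intro s hs hsq
      have ha : 0 < t - s := by linarith [hs.2]
      have hsT : s ∈ Ioo 0 T := ⟨hs.1, hs.2.trans ht.2⟩
      have e : T - s = τ + (t - s) := by rw [hτdef]; ring
      have hle : τ + (t - s) ≤ T := by rw [← e]; linarith [hs.1]
      have b1 := hl x x' (t - s) s hsT ha
      have pf := P.prof_far hτ hq hsq.le hqτ hle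
      rw [← e] at pf
      rw [sq _ ha] at b1
      refine b1.trans ?_
      calc _ = C * M * D * (t - s) ^ (-(1 / 2) : ℝ) *
            (mm T (T - s) ^ ν / (t - s + rr β T (T - s) ^ 2)) := by ring
        _ ≤ C * M * D * (t - s) ^ (-(1 / 2) : ℝ) * (2 * m * ((t - s) / q) ^ κ / (t - s)) := by
            gcongr
        _ = 2 * C * M * m * D * q ^ (-κ) *
            ((t - s) ^ (-(1 / 2) : ℝ) * (t - s) ^ κ * (t - s) ^ (-1 : ℝ)) := by
          rw [Real.div_rpow ha.le hq.le, Real.rpow_neg hq.le, Real.rpow_neg_one]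
          ring
        _ = _ := by
          rw [← Real.rpow_add ha, ← Real.rpow_add ha]
          congr 2; ring)
  have v1 : ∫ a in Ioc 0 q, 2 * C * M * m * D / q * a ^ (-(1 / 2) : ℝ) =
      4 * (C * M * m * D / r) := by
    rw [← intervalIntegral.integral_of_le hq.le, intervalIntegral.integral_const_mul,
      integral_rpow (Or.inl (by norm_num)), show (-(1 / 2) + 1 : ℝ) = 1 / 2 by norm_num, hqr,
      Real.zero_rpow (by norm_num), hqdef]
    field_simp
    ring
  have v2 : ∫ a in Ioi q, 2 * C * M * m * D * q ^ (-κ) * a ^ (κ - 3 / 2) =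
      2 / (1 / 2 - κ) * (C * M * m * D / r) := by
    rw [integral_const_mul, integral_Ioi_rpow_of_lt (by linarith) hq]
    have e1 : κ - 3 / 2 + 1 = κ - 1 / 2 := by ring
    rw [e1, Real.rpow_sub hq, hqr, Real.rpow_neg hq.le]
    have h1 : q ^ κ ≠ 0 := (Real.rpow_pos_of_pos hq _).ne'
    have h2 : 1 / 2 - κ ≠ 0 := by linarith
    have h3 : κ - 1 / 2 = -(1 / 2 - κ) := by ring
    rw [h3]
    field_simp
  rw [v1, v2] at main
  refine main.trans (le_of_eq ?_)
  ring

end core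

lemma heatK_measurable (x : E4) (t : ℝ) (g : E4 → ℝ → ℝ) (hg : Measurable (Function.uncurry g)) :
    Measurable fun s => Fin4 (fun z => g z s) x (t - s) := by
  unfold Fin4
  have h : Measurable (Function.uncurry fun (s : ℝ) (z : E4) => heatK (t - s) x z * g z s) := by
    have h1 : Measurable fun p : ℝ × E4 => g p.2 p.1 :=
      hg.comp (measurable_snd.prodMk measurable_fst)
    have h2 : Measurable fun p : ℝ × E4 => heatK (t - p.1) x p.2 := by
      unfold heatK; fun_prop
    exact h2.mul h1
  exact (h.stronglyMeasurable.integral_prod_right).measurable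

/-- Lemma 5.2: if `|g₁(x,t)| ≤ M μ₀(t)^{ν₂}/|x - ξ(t)|²` on `{|x - ξ(t)| ≥ μ₀(t)R(t)}` and
`g₁` vanishes inside this set, then the Duhamel representation `ψ` of `g₁` satisfies
`|ψ| ≲ M T^{ν₂}|log T|^{1-ν₂}`,
`|ψ(x,t) - ψ(x,T)| ≲ M (T-t)^{ν₂}|log T|^{ν₂}|log(T-t)|^{1-2ν₂}` and
`|∇ψ| ≲ M μ₀(t)^{ν₂-1}/R(t)`. -/
theorem outer_linear_theory_outer_weight (ν₂ β : ℝ) (hν₂ : ν₂ ∈ Ioo (0 : ℝ) (1 / 2))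
    (hβ : β ∈ Ioo (0 : ℝ) (1 / 2)) :
    ∃ C > (0 : ℝ), ∃ T₀ ∈ Ioo (0 : ℝ) (1 / 2), ∀ T ∈ Ioo (0 : ℝ) T₀,
      ∀ ξ : ℝ → E4, ContinuousOn ξ (Icc 0 T) → (∀ t ∈ Icc (0 : ℝ) T, 0 ≤ ξ t 3) →
      ∀ M : ℝ, 0 < M → ∀ g₁ : E4 → ℝ → ℝ, Measurable (Function.uncurry g₁) →
      (∀ x ∈ halfSpace, ∀ t ∈ Ioo (0 : ℝ) T,
        (μ₀ T t * Rfn β T t ≤ ‖x - ξ t‖ →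
          |g₁ x t| ≤ M * μ₀ T t ^ ν₂ / ‖x - ξ t‖ ^ 2) ∧
        (‖x - ξ t‖ < μ₀ T t * Rfn β T t → g₁ x t = 0)) →
      ∀ x : E4, 0 ≤ x 3 → ∀ t ∈ Ioo (0 : ℝ) T,
        |duhamel g₁ x t| ≤ C * M * T ^ ν₂ * |Real.log T| ^ (1 - ν₂) ∧
        |duhamel g₁ x t - duhamel g₁ x T|
          ≤ C * M * (T - t) ^ ν₂ * |Real.log T| ^ ν₂ * |Real.log (T - t)| ^ (1 - 2 * ν₂) ∧
        ‖fderiv ℝ (fun x' => duhamel g₁ x' t) x‖ ≤ C * M * μ₀ T t ^ (ν₂ - 1) / Rfn β T t := by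
  obtain ⟨hν0, hν1⟩ := hν₂
  obtain ⟨hβ0, hβ1⟩ := hβ
  obtain ⟨C, hC, H⟩ := Fin4_facts
  set ε : ℝ := (1 / 2 - ν₂) / 2 with hε
  have hε0 : 0 < ε := by rw [hε]; linarith
  have hκ1 : ν₂ * (1 + 2 * ε) < 1 / 2 := by rw [hε]; nlinarith
  have hκ2 : 0 < 1 / 2 - ν₂ * (1 + 2 * ε) := by linarith
  set A : ℝ := C * (28 + 1 / ν₂) + C / ν₂ with hA
  set B : ℝ := C * (4 + 2 / (1 / 2 - ν₂ * (1 + 2 * ε))) with hB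
  have hA0 : 0 < A := by positivity
  have hB0 : 0 < B := by positivity
  refine ⟨A + B, by positivity, Real.exp (-(1 / ε + 1 / ν₂ + 2)), ⟨Real.exp_pos _, ?_⟩, ?_⟩
  · have h1 : Real.exp (-(1 / ε + 1 / ν₂ + 2)) < Real.exp (-1) := by
      apply Real.exp_lt_exp.2
      have : 0 < 1 / ε + 1 / ν₂ := by positivity
      linarith
    have h2 := Real.exp_neg_one_lt_half
    linarith
  intro T hT ξ _ _ M hM g hg hyp x _ t ht
  have P : Par ν₂ ε β T :=
    ⟨hν0, hν1, hε0, hκ1, hβ0, hβ1, hT.1, by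
      have := Real.log_le_log hT.1 hT.2.le
      rwa [Real.log_exp] at this⟩
  have hadm : ∀ s ∈ Ioo 0 T, Adm (fun z => g z s) (M * mm T (T - s) ^ ν₂) (rr β T (T - s)) (ξ s) := by
    intro s hs z hz
    have hσ : 0 < T - s := by linarith [hs.2]
    have hσT : T - s ≤ T := by linarith [hs.1]
    have hr := P.rr_pos hσ hσT
    have hm : 0 ≤ M * mm T (T - s) ^ ν₂ :=
      mul_nonneg hM.le (Real.rpow_nonneg (P.mm_pos hσ hσT).le _)
    obtain ⟨h1, h2⟩ := hyp z hz s hs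
    rcases le_or_gt (rr β T (T - s)) ‖z - ξ s‖ with h | h
    · have h3 : |g z s| ≤ M * mm T (T - s) ^ ν₂ / ‖z - ξ s‖ ^ 2 := h1 h
      exact ⟨h3, h3.trans (by gcongr)⟩
    · have h3 : g z s = 0 := h2 h
      simp only [h3, abs_zero]
      exact ⟨by positivity, by positivity⟩
  have hfact : ∀ s ∈ Ioo 0 T, _ := fun s hs =>
    H (rr β T (T - s)) (M * mm T (T - s) ^ ν₂) (ξ s) (fun z => g z s)
      (P.rr_pos (by linarith [hs.2]) (by linarith [hs.1]))
      (mul_nonneg hM.le (Real.rpow_nonneg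
        (P.mm_pos (by linarith [hs.2]) (by linarith [hs.1])).le _))
      (hg.comp (measurable_id.prodMk measurable_const)) (hadm s hs)
  set Φ : E4 → ℝ → ℝ → ℝ := fun x a s => Fin4 (fun z => g z s) x a with hΦ
  have hb : ∀ x a s, s ∈ Ioo 0 T → 0 < a →
      |Φ x a s| ≤ C * (M * mm T (T - s) ^ ν₂ / (a + rr β T (T - s) ^ 2)) :=
    fun x a s hs ha => (hfact s hs).1 x a ha
  have hl : ∀ x x' a s, s ∈ Ioo 0 T → 0 < a →
      |Φ x' a s - Φ x a s| ≤ C * (‖x' - x‖ / √a) *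
        (M * mm T (T - s) ^ ν₂ / (a + rr β T (T - s) ^ 2)) :=
    fun x x' a s hs ha => (hfact s hs).2.1 x x' a ha
  have htd : ∀ x a b s, s ∈ Ioo 0 T → 0 < a → a ≤ b → b ≤ 2 * a →
      |Φ x b s - Φ x a s| ≤ C * ((b - a) / a) *
        (M * mm T (T - s) ^ ν₂ / (a + rr β T (T - s) ^ 2)) :=
    fun x a b s hs ha hab hba => (hfact s hs).2.2 x a b ha hab hba
  have hmeas : ∀ x t, Measurable fun s => Φ x (t - s) s :=
    fun x t => heatK_measurable x t g hg
  have ed : ∀ x t, duhamel g x t = ∫ s in (0 : ℝ)..t, Φ x (t - s) s := fun x t => rfl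
  have hτ : 0 < T - t := by linarith [ht.2]
  have hτT : T - t ≤ T := by linarith [ht.1]
  have c2 := core_ii P hC hM hb htd hmeas x t ht
  rw [← ed, ← ed] at c2
  have f2 := P.final_ii hτ hτT
  have f1 := P.final_i hτ hτT
  have fT := (P.final_ii P.T0 le_rfl).trans (P.final_i P.T0 le_rfl)
  have cT := core_T P hC hM hb x 0 le_rfl P.T0
  rw [← ed, sub_zero] at cT
  have hmT : 0 ≤ mm T T ^ ν₂ := Real.rpow_nonneg (P.mm_pos P.T0 le_rfl).le _
  have LT := (P.two_le P.T0 le_rfl).1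
  have hm1 : mm T T ^ ν₂ ≤ mm T T ^ ν₂ * |Real.log T| := le_mul_of_one_le_right hmT (by linarith)
  have i2 : |duhamel g x t - duhamel g x T| ≤ C * (28 + 1 / ν₂) * M *
      ((T - t) ^ ν₂ * |Real.log T| ^ ν₂ * |Real.log (T - t)| ^ (1 - 2 * ν₂)) :=
    c2.trans (by gcongr)
  have hX0 : 0 ≤ (T - t) ^ ν₂ * |Real.log T| ^ ν₂ * |Real.log (T - t)| ^ (1 - 2 * ν₂) := by
    positivity
  have hT0 := P.T0
  have hY0 : 0 ≤ T ^ ν₂ * |Real.log T| ^ (1 - ν₂) := by positivity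
  refine ⟨?_, ?_, ?_⟩
  · have j1 : |duhamel g x t| ≤ |duhamel g x t - duhamel g x T| + |duhamel g x T| := by
      have := abs_add_le (duhamel g x t - duhamel g x T) (duhamel g x T)
      rwa [sub_add_cancel] at this
    have j2 : |duhamel g x t - duhamel g x T| ≤ C * (28 + 1 / ν₂) * M *
        (T ^ ν₂ * |Real.log T| ^ (1 - ν₂)) := i2.trans (by gcongr)
    have j3 : |duhamel g x T| ≤ C / ν₂ * M * (T ^ ν₂ * |Real.log T| ^ (1 - ν₂)) := by
      calc _ ≤ _ := cT
        _ = C / ν₂ * M * mm T T ^ ν₂ := by ring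
        _ ≤ _ := by gcongr; exact hm1.trans fT
    calc _ ≤ A * M * (T ^ ν₂ * |Real.log T| ^ (1 - ν₂)) := by rw [hA]; linarith
      _ ≤ (A + B) * M * (T ^ ν₂ * |Real.log T| ^ (1 - ν₂)) := by gcongr; linarith
      _ = _ := by ring
  · calc _ ≤ _ := i2
      _ ≤ (A + B) * M *
          ((T - t) ^ ν₂ * |Real.log T| ^ ν₂ * |Real.log (T - t)| ^ (1 - 2 * ν₂)) := by
          gcongr
          have : 0 < C / ν₂ := by positivity
          linarith
      _ = _ := by ring
  · have hμ : 0 < mm T (T - t) := P.mm_pos hτ hτT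
    have e1 : (A + B) * M * μ₀ T t ^ (ν₂ - 1) / Rfn β T t =
        (A + B) * M * (mm T (T - t) ^ ν₂ / rr β T (T - t)) := by
      have : μ₀ T t = mm T (T - t) := rfl
      unfold Rfn rr
      rw [this, Real.rpow_sub hμ, Real.rpow_one]
      have := (Real.rpow_pos_of_pos hμ (-β)).ne'
      field_simp
    have hr := P.rr_pos hτ hτT
    have hZ : 0 ≤ mm T (T - t) ^ ν₂ / rr β T (T - t) := by positivity
    rw [e1]
    refine norm_fderiv_le_of_lip' ℝ (by positivity) (Filter.Eventually.of_forall fun x' => ?_)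
    have c3 := core_iii P hC hM hb hl hmeas x x' t ht
    rw [← ed, ← ed] at c3
    refine c3.trans ?_
    gcongr
    linarith
end
end

section
/- Let T > 0, let μ : [−T, T] → ℝ be continuously differentiable, and fix ξ ∈ ℝ⁴. Define u₁(x, t) := −2 ∫_{−T}^{t} μ'(s) k(|x − ξ|, t − s) ds for x ∈ ℝ⁴ ∖ {ξ} and t ∈ (−T, T). Then u₁ is differentiable in t and twice differentiable in x on (ℝ⁴ ∖ {ξ}) × (−T, T), and it satisfies ∂_t u₁(x, t) − Δ_x u₁(x, t) = −2 μ'(t)/|x − ξ|² for all x ≠ ξ and all t ∈ (−T, T). -/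
noncomputable section
open Real Set

/-- The Laplacian on `ℝ⁴`. -/
def lap (f : E4 → ℝ) (x : E4) : ℝ :=
  ∑ i : Fin 4, fderiv ℝ (fun z => fderiv ℝ f z (EuclideanSpace.single i 1)) x
    (EuclideanSpace.single i 1)

/-- `k(ζ, t) = (1 - exp(-ζ²/(4t)))/ζ²`. -/
def kk (ζ t : ℝ) : ℝ := (1 - Real.exp (-ζ ^ 2 / (4 * t))) / ζ ^ 2

/-- `u₁(x, t) = -2 ∫_{-T}^{t} μ'(s) k(|x - ξ|, t - s) ds`. -/
def u₁ (T : ℝ) (μ' : ℝ → ℝ) (ξ : E4) (x : E4) (t : ℝ) : ℝ :=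
  -2 * ∫ s in (-T)..t, μ' s * kk ‖x - ξ‖ (t - s)

open MeasureTheory Topology Filter

def psi (n : ℕ) (w τ : ℝ) : ℝ :=
  if 0 < τ then (-1 / (4 * τ)) ^ n * Real.exp (-w / (4 * τ)) else 0

lemma psi_measurable (n : ℕ) (w : ℝ) : Measurable (psi n w) := by
  unfold psi
  refine Measurable.ite measurableSet_Ioi ?_ measurable_const
  fun_prop

lemma psi_bound (n : ℕ) {w₀ w : ℝ} (h0 : 0 < w₀) (h : w₀ ≤ w) (τ : ℝ) :
    |psi n w τ| ≤ n.factorial / w₀ ^ n := by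
  unfold psi
  split_ifs with hτ
  · set y := 1 / (4 * τ) with hy
    have hy0 : 0 < y := by positivity
    have e1 : -1 / (4 * τ) = -y := by rw [hy]; ring
    have e2 : -w / (4 * τ) = -(w * y) := by rw [hy]; ring
    rw [e1, e2, abs_mul, abs_pow, abs_neg, abs_of_pos hy0, abs_of_pos (Real.exp_pos _),
      Real.exp_neg, ← div_eq_mul_inv, div_le_div_iff₀ (Real.exp_pos _) (by positivity)]
    have h1 := Real.pow_div_factorial_le_exp (w₀ * y) (by positivity) n
    have h2 : Real.exp (w₀ * y) ≤ Real.exp (w * y) := by gcongr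
    have h3 := h1.trans h2
    rw [div_le_iff₀ (by positivity), mul_pow] at h3
    linarith
  · simp; positivity

lemma psi_deriv_w (n : ℕ) (w τ : ℝ) :
    HasDerivAt (fun w => psi n w τ) (psi (n + 1) w τ) w := by
  unfold psi
  split_ifs with hτ
  · have h : HasDerivAt (fun w : ℝ => -w / (4 * τ)) (-1 / (4 * τ)) w :=
      ((hasDerivAt_id w).neg).div_const _
    refine (h.exp.const_mul ((-1 / (4 * τ)) ^ n)).congr_deriv ?_
    rw [pow_succ]; ring
  · exact hasDerivAt_const _ _

lemma psi_deriv_tau {w : ℝ} (hw : 0 < w) (τ : ℝ) :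
    HasDerivAt (fun τ => psi 0 w τ) (4 * w * psi 2 w τ) τ := by
  rcases lt_trichotomy τ 0 with h | h | h
  · have : psi 2 w τ = 0 := by simp [psi, h.le]
    rw [this, mul_zero]
    refine (hasDerivAt_const τ (0 : ℝ)).congr_of_eventuallyEq ?_
    filter_upwards [Iio_mem_nhds h] with s hs
    have hs' : s < 0 := hs
    simp [psi, hs'.le]
  · subst h
    have : psi 2 w 0 = 0 := by simp [psi]
    rw [this, mul_zero]
    have hO : (fun τ => psi 0 w τ) =O[𝓝 (0 : ℝ)] fun x => ‖x - 0‖ ^ 2 := by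
      refine Asymptotics.IsBigO.of_bound (32 / w ^ 2) (Eventually.of_forall fun s => ?_)
      have hb := psi_bound 2 hw le_rfl s
      clear this
      unfold psi at hb ⊢
      split_ifs at hb ⊢ with hs
      · simp only [sub_zero, Real.norm_eq_abs, pow_zero, one_mul, abs_pow, sq_abs]
        rw [abs_mul, abs_of_nonneg (by positivity : (0 : ℝ) ≤ (-1 / (4 * s)) ^ 2)] at hb
        have : |Real.exp (-w / (4 * s))| =
          16 * s ^ 2 * ((-1 / (4 * s)) ^ 2 * |Real.exp (-w / (4 * s))|) := by
          field_simp; norm_num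
        rw [this]
        calc _ ≤ 16 * s ^ 2 * ((Nat.factorial 2 : ℕ) / w ^ 2) := by gcongr
          _ = _ := by simp [Nat.factorial]; ring
      · rw [norm_zero]; positivity
    have := (Asymptotics.IsBigO.hasFDerivAt (𝕜 := ℝ) hO (by norm_num)).hasDerivAt
    simpa using this
  · have hd : HasDerivAt (fun τ : ℝ => -w / (4 * τ)) (w / (4 * τ ^ 2)) τ := by
      have := ((hasDerivAt_id τ).const_mul 4).fun_inv (by simp; positivity)
      refine (this.const_mul (-w)).congr_deriv ?_
      simp only [id]
      field_simp
      try norm_num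
    have h2 := hd.exp
    have e : 4 * w * psi 2 w τ = Real.exp (-w / (4 * τ)) * (w / (4 * τ ^ 2)) := by
      simp only [psi, h, if_true]; field_simp
      try norm_num
    rw [e]
    refine h2.congr_of_eventuallyEq ?_
    filter_upwards [Ioi_mem_nhds h] with s hs
    have hs' : 0 < s := hs
    simp [psi, hs']

def PP (T : ℝ) (m : ℝ → ℝ) (n : ℕ) (w t : ℝ) : ℝ := ∫ s in (-T)..T, m s * psi n w (t - s)

section
variable {T : ℝ} {m : ℝ → ℝ}

lemma meas_aux (hm : IntervalIntegrable m volume (-T) T) (n : ℕ) (w t : ℝ) :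
    AEStronglyMeasurable (fun s => m s * psi n w (t - s))
      (volume.restrict (Set.uIoc (-T) T)) := by
  refine (intervalIntegrable_iff.1 hm).aestronglyMeasurable.mul ?_
  exact ((psi_measurable n w).comp (measurable_const.sub measurable_id)).aestronglyMeasurable

lemma int_aux (hm : IntervalIntegrable m volume (-T) T) (n : ℕ) {w : ℝ} (hw : 0 < w) (t : ℝ) :
    IntervalIntegrable (fun s => m s * psi n w (t - s)) volume (-T) T := by
  refine (hm.norm.mul_const (n.factorial / w ^ n)).mono_fun (meas_aux hm n w t) ?_
  refine Eventually.of_forall fun s => ?_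
  have := psi_bound n hw le_rfl (t - s)
  have hp : (0 : ℝ) ≤ n.factorial / w ^ n := by positivity
  simp only [norm_mul, norm_norm, Real.norm_eq_abs, abs_of_nonneg hp, abs_abs]
  gcongr

lemma PP_deriv_w (hm : IntervalIntegrable m volume (-T) T) (n : ℕ) {w : ℝ} (hw : 0 < w) (t : ℝ) :
    HasDerivAt (fun w => PP T m n w t) (PP T m (n + 1) w t) w := by
  unfold PP
  refine (intervalIntegral.hasDerivAt_integral_of_dominated_loc_of_deriv_le
    (F' := fun w s => m s * psi (n + 1) w (t - s))
    (s := Ioi (w / 2)) (bound := fun s => ‖m s‖ * ((n + 1).factorial / (w / 2) ^ (n + 1)))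
    (Ioi_mem_nhds (by linarith)) (Eventually.of_forall fun w' => meas_aux hm n w' t)
    (int_aux hm n hw t) (meas_aux hm (n + 1) w t) ?_ (hm.norm.mul_const _) ?_).2
  · refine Eventually.of_forall fun s _ w' hw' => ?_
    have := psi_bound (n + 1) (half_pos hw) (le_of_lt hw') (t - s)
    rw [norm_mul]
    gcongr
    exact this
  · exact Eventually.of_forall fun s _ w' hw' => (psi_deriv_w n w' (t - s)).const_mul _

lemma PP_deriv_t (hm : IntervalIntegrable m volume (-T) T) {w : ℝ} (hw : 0 < w) (t : ℝ) :
    HasDerivAt (fun t => PP T m 0 w t) (4 * w * PP T m 2 w t) t := by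
  have key := (intervalIntegral.hasDerivAt_integral_of_dominated_loc_of_deriv_le
    (F := fun t s => m s * psi 0 w (t - s)) (F' := fun t s => 4 * w * (m s * psi 2 w (t - s)))
    (x₀ := t) (μ := volume) (a := -T) (b := T)
    (s := univ) (bound := fun s => 4 * w * (‖m s‖ * ((Nat.factorial 2 : ℕ) / w ^ 2)))
    univ_mem (Eventually.of_forall fun t' => meas_aux hm 0 w t')
    (int_aux hm 0 hw t) ((meas_aux hm 2 w t).const_mul _) ?_
    ((hm.norm.mul_const _).const_mul _) ?_).2
  · unfold PP
    rwa [intervalIntegral.integral_const_mul] at key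
  · refine Eventually.of_forall fun s _ t' _ => ?_
    have := psi_bound 2 hw le_rfl (t' - s)
    rw [norm_mul, Real.norm_of_nonneg (by positivity : 0 ≤ 4 * w), norm_mul]
    gcongr
    exact this
  · refine Eventually.of_forall fun s _ t' _ => ?_
    have h := (psi_deriv_tau hw (t' - s)).comp_sub_const t' s
    refine (h.const_mul (m s)).congr_deriv ?_
    ring

lemma PP_contDiffOn (hm : IntervalIntegrable m volume (-T) T) (t : ℝ) (k : ℕ) :
    ∀ n : ℕ, ContDiffOn ℝ k (fun w => PP T m n w t) (Ioi 0) := by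
  induction k with
  | zero =>
    intro n
    exact contDiffOn_zero.2 fun w hw => (PP_deriv_w hm n hw t).continuousAt.continuousWithinAt
  | succ k ih =>
    intro n
    push_cast
    rw [contDiffOn_succ_iff_deriv_of_isOpen isOpen_Ioi]
    refine ⟨fun w hw => (PP_deriv_w hm n hw t).differentiableAt.differentiableWithinAt,
      by simp, (ih (n + 1)).congr fun w hw => (PP_deriv_w hm n hw t).deriv⟩

lemma u_eq (hm : IntervalIntegrable m volume (-T) T) (ξ : E4) {x : E4} (hx : x ≠ ξ) {t : ℝ}
    (ht : t ∈ Ioo (-T) T) :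
    u₁ T m ξ x t = -2 * ((∫ s in (-T)..t, m s) - PP T m 0 (‖x - ξ‖ ^ 2) t) / ‖x - ξ‖ ^ 2 := by
  have hw : 0 < ‖x - ξ‖ ^ 2 := by
    have : 0 < ‖x - ξ‖ := norm_pos_iff.2 (sub_ne_zero.2 hx)
    positivity
  set w := ‖x - ξ‖ ^ 2 with hwdef
  have hi := int_aux hm 0 hw t
  have hs1 : Set.uIcc (-T) t ⊆ Set.uIcc (-T) T := by
    rw [uIcc_of_le ht.1.le, uIcc_of_le (ht.1.trans ht.2).le]; exact Icc_subset_Icc_right ht.2.le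
  have hs2 : Set.uIcc t T ⊆ Set.uIcc (-T) T := by
    rw [uIcc_of_le ht.2.le, uIcc_of_le (ht.1.trans ht.2).le]; exact Icc_subset_Icc_left ht.1.le
  have hP : PP T m 0 w t = ∫ s in (-T)..t, m s * psi 0 w (t - s) := by
    unfold PP
    rw [← intervalIntegral.integral_add_adjacent_intervals (hi.mono_set hs1) (hi.mono_set hs2)]
    have : ∫ s in t..T, m s * psi 0 w (t - s) = 0 := by
      refine intervalIntegral.integral_zero_ae (Eventually.of_forall fun s hs => ?_)
      rw [uIoc_of_le ht.2.le] at hs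
      have : ¬ 0 < t - s := by linarith [hs.1]
      simp [psi, this]
    rw [this, add_zero]
  rw [hP, ← intervalIntegral.integral_sub (hm.mono_set hs1) (hi.mono_set hs1)]
  unfold u₁
  rw [mul_div_assoc, ← intervalIntegral.integral_div]
  congr 1
  refine intervalIntegral.integral_congr_ae ?_
  have hne : ∀ᵐ s : ℝ, s ≠ t := by simp [ae_iff]
  filter_upwards [hne] with s hst hs
  rw [uIoc_of_le ht.1.le] at hs
  have : 0 < t - s := by
    have := lt_of_le_of_ne hs.2 hst
    linarith
  have h' : s < t := by linarith
  simp [psi, kk, h', ← hwdef]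
  ring
end

lemma normsq_deriv (ξ z : E4) :
    HasFDerivAt (fun z : E4 => ‖z - ξ‖ ^ 2) (2 • (innerSL ℝ (z - ξ))) z := by
  have := (((hasFDerivAt_id z).sub_const ξ)).norm_sq
  simpa using this

lemma lap_radial (G G1 G2 : ℝ → ℝ) (h1 : ∀ w, 0 < w → HasDerivAt G (G1 w) w)
    (h2 : ∀ w, 0 < w → HasDerivAt G1 (G2 w) w) (f : E4 → ℝ) (ξ x : E4) (hx : x ≠ ξ)
    (hf : ∀ z, z ≠ ξ → f z = G (‖z - ξ‖ ^ 2)) :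
    lap f x = 4 * ‖x - ξ‖ ^ 2 * G2 (‖x - ξ‖ ^ 2) + 8 * G1 (‖x - ξ‖ ^ 2) := by
  have pos : ∀ z, z ≠ ξ → 0 < ‖z - ξ‖ ^ 2 := fun z hz => by
    have : 0 < ‖z - ξ‖ := norm_pos_iff.2 (sub_ne_zero.2 hz)
    positivity
  have hev : ∀ z : E4, z ≠ ξ → ∀ᶠ y in 𝓝 z, y ≠ ξ := fun z hz => isOpen_ne.mem_nhds hz
  have hin : ∀ (z : E4) (i : Fin 4), inner ℝ z (EuclideanSpace.single i (1 : ℝ)) = z i := by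
    intro z i; simp [EuclideanSpace.inner_single_right]
  have d1 : ∀ (i : Fin 4) (z : E4), z ≠ ξ → fderiv ℝ f z (EuclideanSpace.single i 1) =
      G1 (‖z - ξ‖ ^ 2) * (2 * (z i - ξ i)) := by
    intro i z hz
    have h := (h1 _ (pos z hz)).comp_hasFDerivAt z (normsq_deriv ξ z)
    have h' : HasFDerivAt f _ z := h.congr_of_eventuallyEq ((hev z hz).mono fun y hy => hf y hy)
    rw [h'.fderiv]
    simp [hin]
  have d2 : ∀ i : Fin 4, fderiv ℝ (fun z => fderiv ℝ f z (EuclideanSpace.single i 1)) x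
    (EuclideanSpace.single i 1) =
      G2 (‖x - ξ‖ ^ 2) * (4 * (x i - ξ i) ^ 2) + G1 (‖x - ξ‖ ^ 2) * 2 := by
    intro i
    have h := (h2 _ (pos x hx)).comp_hasFDerivAt x (normsq_deriv ξ x)
    have hl : HasFDerivAt (fun z : E4 => 2 * (z i - ξ i))
        ((2 : ℝ) • (EuclideanSpace.proj i : E4 →L[ℝ] ℝ)) x :=
      (((EuclideanSpace.proj i : E4 →L[ℝ] ℝ).hasFDerivAt).sub_const (ξ i)).const_mul 2
    have hm := h.mul hl
    have h' := hm.congr_of_eventuallyEq ((hev x hx).mono fun y hy => d1 i y hy)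
    rw [h'.fderiv]
    simp [hin]
    ring
  unfold lap
  simp only [d2]
  have hn : ‖x - ξ‖ ^ 2 = ∑ i : Fin 4, (x i - ξ i) ^ 2 := by
    rw [EuclideanSpace.real_norm_sq_eq]; simp
  rw [Finset.sum_add_distrib, ← Finset.mul_sum, ← Finset.mul_sum, ← hn]
  simp
  ring

theorem u₁_solves_heat_with_source (T : ℝ) (hT : 0 < T) (μ μ' : ℝ → ℝ)
    (hμ : ∀ t ∈ Icc (-T) T, HasDerivAt μ (μ' t) t)
    (hμ'cont : ContinuousOn μ' (Icc (-T) T)) (ξ : E4) :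
    ∀ x : E4, x ≠ ξ → ∀ t ∈ Ioo (-T) T,
      DifferentiableAt ℝ (fun s => u₁ T μ' ξ x s) t ∧
      ContDiffAt ℝ 2 (fun x' => u₁ T μ' ξ x' t) x ∧
      deriv (fun s => u₁ T μ' ξ x s) t - lap (fun x' => u₁ T μ' ξ x' t) x
        = -2 * μ' t / ‖x - ξ‖ ^ 2 := by
  intro x hx t ht
  have hm : IntervalIntegrable μ' volume (-T) T := by
    apply ContinuousOn.intervalIntegrable
    rwa [uIcc_of_le (by linarith)]
  have hw : 0 < ‖x - ξ‖ ^ 2 := by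
    have : 0 < ‖x - ξ‖ := norm_pos_iff.2 (sub_ne_zero.2 hx)
    positivity
  have hM : HasDerivAt (fun t => ∫ s in (-T)..t, μ' s) (μ' t) t := by
    refine intervalIntegral.integral_hasDerivAt_right (hm.mono_set ?_) ?_ ?_
    · rw [uIcc_of_le ht.1.le, uIcc_of_le (ht.1.trans ht.2).le]
      exact Icc_subset_Icc_right ht.2.le
    · exact (hμ'cont.mono Ioo_subset_Icc_self).stronglyMeasurableAtFilter isOpen_Ioo t ht
    · exact hμ'cont.continuousAt (Icc_mem_nhds ht.1 ht.2)
  have hdt : HasDerivAt (fun s => u₁ T μ' ξ x s)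
      (-2 * (μ' t - 4 * ‖x - ξ‖ ^ 2 * PP T μ' 2 (‖x - ξ‖ ^ 2) t) / ‖x - ξ‖ ^ 2) t := by
    refine (((hM.sub (PP_deriv_t hm hw t)).const_mul (-2)).div_const _).congr_of_eventuallyEq ?_
    filter_upwards [Ioo_mem_nhds ht.1 ht.2] with s hs
    exact u_eq hm ξ hx hs
  set M := ∫ s in (-T)..t, μ' s with hMdef
  have hfe : ∀ z, z ≠ ξ → u₁ T μ' ξ z t =
      (fun w => -2 * (M - PP T μ' 0 w t) / w) (‖z - ξ‖ ^ 2) := fun z hz => u_eq hm ξ hz ht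
  refine ⟨hdt.differentiableAt, ?_, ?_⟩
  · have hc : ContDiffAt ℝ 2 (fun w => -2 * (M - PP T μ' 0 w t) / w) (‖x - ξ‖ ^ 2) := by
      have h0 : ContDiffAt ℝ 2 (fun w => PP T μ' 0 w t) (‖x - ξ‖ ^ 2) :=
        (PP_contDiffOn hm t 2 0).contDiffAt (Ioi_mem_nhds hw)
      exact (contDiffAt_const.mul (contDiffAt_const.sub h0)).div contDiffAt_id hw.ne'
    have hn : ContDiffAt ℝ 2 (fun z : E4 => ‖z - ξ‖ ^ 2) x :=
      ((contDiff_id.sub contDiff_const).norm_sq ℝ).contDiffAt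
    refine (hc.comp x hn).congr_of_eventuallyEq ?_
    filter_upwards [isOpen_ne.mem_nhds hx] with z hz using hfe z hz
  · rw [hdt.deriv]
    have g1 : ∀ w, 0 < w → HasDerivAt (fun w => -2 * (M - PP T μ' 0 w t) / w)
        (2 * PP T μ' 1 w t / w + 2 * (M - PP T μ' 0 w t) / w ^ 2) w := by
      intro w hw
      refine ((((PP_deriv_w hm 0 hw t).const_sub M).const_mul (-2)).fun_div (hasDerivAt_id w)
        hw.ne').congr_deriv ?_
      simp only [id]
      field_simp
      ring
    have g2 : ∀ w, 0 < w → HasDerivAt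
        (fun w => 2 * PP T μ' 1 w t / w + 2 * (M - PP T μ' 0 w t) / w ^ 2)
        (2 * PP T μ' 2 w t / w - 4 * PP T μ' 1 w t / w ^ 2
          - 4 * (M - PP T μ' 0 w t) / w ^ 3) w := by
      intro w hw
      refine ((((PP_deriv_w hm 1 hw t).const_mul 2).fun_div (hasDerivAt_id w) hw.ne').fun_add
        ((((PP_deriv_w hm 0 hw t).const_sub M).const_mul 2).fun_div
          ((hasDerivAt_id w).fun_pow 2) (by simpa using hw.ne'))).congr_deriv ?_
      simp only [id]
      field_simp
      ring
    rw [lap_radial _ _ _ g1 g2 _ ξ x hx hfe]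
    generalize ‖x - ξ‖ ^ 2 = w at hw
    field_simp
    ring
end
end
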